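/- Let (Δ, π) be a balanced simplicial complex of dimension d−1 over a field k. If the Stanley-Reisner ring k[Δ] satisfies Serre's condition (S_ℓ), then k[Δ_S] satisfies (S_ℓ) for every subset S ⊆ [d], where Δ_S is the S-rank selected subcomplex of Δ. -/

import Mathlib

open Finset

/-- An abstract simplicial complex on vertex type `V`, given by a finite, downward closed
family of finite subsets of `V` (its faces). -/
structure SComplex (V : Type) [DecidableEq V] where
  faces : Finset (Finset V)
  down_closed : ∀ ⦃s t : Finset V⦄, s ∈ faces → t ⊆ s → t ∈ faces

namespace SComplex

variable {V : Type} [DecidableEq V]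

/-- `K.rank = d = dim k[Δ] = dim Δ + 1` is the maximal cardinality of a face of `K`. -/
def rank (K : SComplex V) : ℕ := K.faces.sup Finset.card

/-- `F` is a facet (maximal face) of `K`. -/
def IsFacet (K : SComplex V) (F : Finset V) : Prop :=
  F ∈ K.faces ∧ ∀ G ∈ K.faces, F ⊆ G → F = G

/-- `K` is pure: all facets have the maximal cardinality `K.rank`. -/
def Pure (K : SComplex V) : Prop := ∀ F : Finset V, K.IsFacet F → F.card = K.rank

/-- The link `lk_K(T) = {G ∈ K | T ∪ G ∈ K, T ∩ G = ∅}`. -/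
def link (K : SComplex V) (T : Finset V) : SComplex V where
  faces := K.faces.filter fun G => Disjoint T G ∧ T ∪ G ∈ K.faces
  down_closed := by
    intro s t hs hts
    simp only [Finset.mem_filter] at hs ⊢
    exact ⟨K.down_closed hs.1 hts, hs.2.1.mono_right hts,
      K.down_closed hs.2.2 (Finset.union_subset_union_right hts)⟩

/-- The anti-star `ast_K(T) = {G ∈ K | T ∩ G = ∅}`. -/
def antistar (K : SComplex V) (T : Finset V) : SComplex V where
  faces := K.faces.filter fun G => Disjoint T G
  down_closed := by
    intro s t hs hts
    simp only [Finset.mem_filter] at hs ⊢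
    exact ⟨K.down_closed hs.1 hts, hs.2.mono_right hts⟩

/-- The induced subcomplex of `K` on a set `W` of vertices. -/
def restrict (K : SComplex V) (W : Finset V) : SComplex V where
  faces := K.faces.filter fun G => G ⊆ W
  down_closed := by
    intro s t hs hts
    simp only [Finset.mem_filter] at hs ⊢
    exact ⟨K.down_closed hs.1 hts, hts.trans hs.2⟩

/-- The subcomplex of faces of cardinality at most `m`; as cardinality = dimension + 1, this is
the `(m-1)`-skeleton `Δ^{(m-1)}`. -/
def skelCard (K : SComplex V) (m : ℕ) : SComplex V where
  faces := K.faces.filter fun G => G.card ≤ m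
  down_closed := by
    intro s t hs hts
    simp only [Finset.mem_filter] at hs ⊢
    exact ⟨K.down_closed hs.1 hts, le_trans (Finset.card_le_card hts) hs.2⟩

/-- `K.trunc j` is `[Δ]_{>j}`, the order complex of the poset of faces of `K` of cardinality
(equivalently, of height in the face poset) `> j`: its faces are the chains of such faces.
For `j = 0` this is the barycentric subdivision of `K`. -/
def trunc (K : SComplex V) (j : ℕ) : SComplex (Finset V) where
  faces := K.faces.powerset.filter fun C =>
    (∀ s ∈ C, j < s.card) ∧ ∀ s ∈ C, ∀ t ∈ C, s ⊆ t ∨ t ⊆ s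
  down_closed := by
    intro s t hs hts
    simp only [Finset.mem_powerset, Finset.mem_filter] at hs ⊢
    exact ⟨hts.trans hs.1, fun a ha => hs.2.1 a (hts ha),
      fun a ha b hb => hs.2.2 a (hts ha) b (hts hb)⟩

/-- `Δ_A`: the complex obtained from `K` by deleting all faces containing a member of `A`. -/
def deleteAbove (K : SComplex V) (A : Finset (Finset V)) : SComplex V where
  faces := K.faces.filter fun s => ∀ τ ∈ A, ¬ τ ⊆ s
  down_closed := by
    intro s t hs hts
    simp only [Finset.mem_filter] at hs ⊢
    exact ⟨K.down_closed hs.1 hts, fun τ hτ hsub => hs.2 τ hτ (hsub.trans hts)⟩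

/-- The number of faces of `K` of cardinality `i`, i.e. the face number `f_{i-1}(K)`. -/
def faceCount (K : SComplex V) (i : ℕ) : ℕ := (K.faces.filter fun s => s.card = i).card

/-- The Euler characteristic `χ(K) = Σ_{i ≥ 0} (-1)^i f_i(K)`. -/
def eulerChar (K : SComplex V) : ℤ :=
  ∑ s ∈ K.faces.filter (fun s => s ≠ ∅), (-1 : ℤ) ^ (s.card - 1)

/-- The reduced Euler characteristic `χ̃(K) = χ(K) - 1`. -/
def reducedEulerChar (K : SComplex V) : ℤ := eulerChar K - 1

end SComplex

/-! ### Simplicial homology with coefficients in a field `k` -/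

/-- An arbitrary linear order on a finite type. -/
noncomputable def arbOrder (V : Type) [Fintype V] : LinearOrder V :=
  LinearOrder.lift' (Fintype.equivFin V) (Equiv.injective _)

namespace SComplex

variable {V : Type} [DecidableEq V]

/-- The faces of `K` of cardinality `n`, as a type. -/
def Faces (K : SComplex V) (n : ℕ) : Type :=
  {s : Finset V // s ∈ K.faces ∧ s.card = n}

/-- The space of reduced simplicial `n`-chains of `K`: formal `k`-linear combinations of the
faces of cardinality `n` (such a face has dimension `n - 1`; the empty face sits in degree `0`,
which produces *reduced* homology). -/
abbrev ChainsOf (k : Type) [Field k] (K : SComplex V) (n : ℕ) : Type := Faces K n →₀ k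

variable (k : Type) [Field k] [Fintype V]

/-- The simplicial boundary map, with signs determined by an arbitrary but fixed linear order
on the vertices. -/
noncomputable def bd (K : SComplex V) (n : ℕ) :
    ChainsOf k K n →ₗ[k] ChainsOf k K (n - 1) :=
  letI : LinearOrder V := arbOrder V
  Finsupp.lsum k fun s : Faces K n =>
    LinearMap.toSpanSingleton k (ChainsOf k K (n - 1))
      (∑ x ∈ s.1.attach,
        ((-1 : k) ^ (s.1.filter (fun y => y < x.1)).card) •
          Finsupp.single
            (⟨s.1.erase x.1,
              K.down_closed s.2.1 (Finset.erase_subset _ _),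
              by rw [Finset.card_erase_of_mem x.2, s.2.2]⟩ : Faces K (n - 1))
            (1 : k))

/-- `HVanish k K i` says that the reduced simplicial homology `H̃_{i-1}(K; k)` vanishes.
Note the indexing convention: the index `i` is the *cardinality* of the relevant faces, so this
is reduced homology in topological degree `i - 1`; e.g. `HVanish k K 1` says `H̃₀(K; k) = 0`
(`K` is connected and nonempty) and `HVanish k K 0` says `H̃₋₁(K; k) = 0` (`K` has a face).
Since the cycles in degree `i - 1` are `ker ∂ᵢ` and the boundaries are `im ∂ᵢ₊₁`, and the
boundaries are always contained in the cycles, vanishing of homology says exactly that every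
cycle is a boundary. -/
def HVanish (K : SComplex V) (i : ℕ) : Prop :=
  LinearMap.ker (bd k K i) ≤ LinearMap.range (bd k K (i + 1))

/-- `redHomologyRank k K i` is the dimension `dim_k H̃_{i-1}(K; k)` of the reduced simplicial
homology of `K` in topological degree `i - 1` (cardinality index `i`), namely the dimension of
the cycles `ker ∂ᵢ` modulo the boundaries `im ∂ᵢ₊₁`. -/
noncomputable def redHomologyRank (K : SComplex V) (i : ℕ) : ℕ :=
  Module.finrank k ↥(LinearMap.ker (bd k K i)) -
    Module.finrank k ↥(LinearMap.range (bd k K (i + 1)) ⊓ LinearMap.ker (bd k K i))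

end SComplex

/-! ### Depth, Serre conditions, and Stanley–Reisner rings -/

/-- The length of a longest regular sequence on `R` contained in the ideal `I`
(the `I`-depth of `R`). -/
noncomputable def depthIn (R : Type) [CommRing R] (I : Ideal R) : ℕ :=
  sSup {n : ℕ | ∃ rs : List R, rs.length = n ∧ (∀ r ∈ rs, r ∈ I) ∧
    RingTheory.Sequence.IsRegular R rs}

/-- Serre's condition `(S_ℓ)` for a commutative ring:
`depth R_p ≥ min {ℓ, dim R_p}` for every prime `p`. -/
def SerreCondS (ℓ : ℕ) (R : Type) [CommRing R] : Prop :=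
  ∀ (p : Ideal R) (hp : p.IsPrime),
    haveI := hp
    min ((ℓ : ℕ∞) : WithBot ℕ∞) (ringKrullDim (Localization.AtPrime p)) ≤
      ((depthIn (Localization.AtPrime p)
        (IsLocalRing.maximalIdeal (Localization.AtPrime p)) : ℕ∞) : WithBot ℕ∞)

namespace SComplex

variable {V : Type} [DecidableEq V] (k : Type) [Field k]

/-- The Stanley–Reisner ideal of `K`: generated by the squarefree monomials supported on
non-faces. -/
noncomputable def srIdeal (K : SComplex V) : Ideal (MvPolynomial V k) :=
  Ideal.span ((fun s : Finset V => ∏ v ∈ s, MvPolynomial.X v) '' {s : Finset V | s ∉ K.faces})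

/-- The Stanley–Reisner ring `k[Δ]`. -/
noncomputable abbrev SRRing (K : SComplex V) : Type := MvPolynomial V k ⧸ srIdeal k K

/-- `depth k[Δ]`: the depth of the Stanley–Reisner ring with respect to its irrelevant
(graded maximal) ideal. -/
noncomputable def srDepth (K : SComplex V) : ℕ :=
  depthIn (SRRing k K)
    (Ideal.span (Set.range fun v : V => Ideal.Quotient.mk (srIdeal k K) (MvPolynomial.X v)))

/-- `k[Δ]` satisfies Serre's condition `(S_ℓ)`. -/
def SerreS (ℓ : ℕ) (K : SComplex V) : Prop := SerreCondS ℓ (SRRing k K)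

end SComplex

/-! ### Order complexes of finite posets -/

/-- The order complex `O(P)` of a finite poset: its faces are the chains of `P`. -/
def orderComplex (P : Type) [DecidableEq P] [Fintype P] [PartialOrder P]
    [∀ a b : P, Decidable (a ≤ b)] : SComplex P where
  faces := Finset.univ.filter fun C : Finset P => ∀ a ∈ C, ∀ b ∈ C, a ≤ b ∨ b ≤ a
  down_closed := by
    intro s t hs hts
    simp only [Finset.mem_filter, Finset.mem_univ, true_and] at hs ⊢
    exact fun a ha b hb => hs a (hts ha) b (hts hb)

/-- The height of an element of a finite poset: the maximal cardinality of a chain with top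
element `p` (so minimal elements have height `1`). -/
def pheight {P : Type} [DecidableEq P] [Fintype P] [PartialOrder P]
    [∀ a b : P, Decidable (a ≤ b)] (p : P) : ℕ :=
  Finset.sup (Finset.univ.filter fun C : Finset P =>
    p ∈ C ∧ (∀ a ∈ C, a ≤ p) ∧ ∀ a ∈ C, ∀ b ∈ C, a ≤ b ∨ b ≤ a) Finset.card

/-- The height `ht P` of a finite poset: the maximal cardinality of a chain. -/
def pheightMax (P : Type) [DecidableEq P] [Fintype P] [PartialOrder P]
    [∀ a b : P, Decidable (a ≤ b)] : ℕ :=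
  Finset.univ.sup (pheight (P := P))

/-- `O(P_{>j})`: the full subcomplex of the order complex on the elements of height `> j`. -/
def ocAbove (P : Type) [DecidableEq P] [Fintype P] [PartialOrder P]
    [∀ a b : P, Decidable (a ≤ b)] (j : ℕ) : SComplex P :=
  (orderComplex P).restrict (Finset.univ.filter fun p => j < pheight p)

/-- The face poset `F(Δ)` of a simplicial complex: the nonempty faces, ordered by inclusion. -/
abbrev SComplex.FacePoset {V : Type} [DecidableEq V] (K : SComplex V) : Type :=
  {s : Finset V // s ∈ K.faces ∧ s ≠ ∅}

instance {V : Type} [DecidableEq V] (K : SComplex V) :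
    ∀ a b : K.FacePoset, Decidable (a ≤ b) := fun a b =>
  decidable_of_iff (a.1 ≤ b.1) Subtype.coe_le_coe

section

open RingTheory.Sequence IsLocalRing CategoryTheory Abelian

/-- There is a weakly `M`-regular sequence of length `n` in the maximal ideal of `A`; for `M` finite
over a noetherian local ring this says that the depth of `M` is at least `n`. -/
def DepthGE (A : Type) [CommRing A] [IsLocalRing A] (n : ℕ) (M : Type) [AddCommGroup M]
    [Module A M] : Prop :=
  ∃ rs : List A, rs.length = n ∧ (∀ r ∈ rs, r ∈ maximalIdeal A) ∧ IsWeaklyRegular M rs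

section Local
variable {A : Type} [CommRing A] [IsLocalRing A]

theorem depthGE_of_subsingleton (n : ℕ) (M : Type) [AddCommGroup M] [Module A M]
    [Subsingleton M] : DepthGE A n M := by
  refine ⟨List.replicate n 0, by simp, ?_, ⟨fun i h => ?_⟩⟩
  · intro r hr
    rw [List.eq_of_mem_replicate hr]
    exact Ideal.zero_mem _
  · intro a b _
    obtain ⟨a, rfl⟩ := Submodule.Quotient.mk_surjective _ a
    obtain ⟨b, rfl⟩ := Submodule.Quotient.mk_surjective _ b
    rw [Subsingleton.elim a b]

variable [IsNoetherianRing A]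

theorem depthGE_iff_ext (n : ℕ) (M : Type) [AddCommGroup M] [Module A M] [Module.Finite A M] :
    DepthGE A n M ↔ ∀ i < n, Subsingleton
      (Ext (ModuleCat.of A (A ⧸ maximalIdeal A)) (ModuleCat.of A M) i) := by
  rcases subsingleton_or_nontrivial M with hM | hM
  · refine ⟨fun _ i _ => ?_, fun _ => depthGE_of_subsingleton n M⟩
    have : Limits.IsZero (ModuleCat.of A M) := ModuleCat.isZero_of_subsingleton _
    refine ⟨fun a b => ?_⟩
    rw [← Ext.comp_mk₀_id a, ← Ext.comp_mk₀_id b, this.eq_of_src (𝟙 _) 0]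
    simp
  · have hlt : maximalIdeal A • (⊤ : Submodule A M) < ⊤ :=
      (Submodule.top_ne_ideal_smul_of_le_jacobson_annihilator
        (maximalIdeal_le_jacobson _)).symm.lt_top
    have hs : Module.support A (A ⧸ maximalIdeal A) = PrimeSpectrum.zeroLocus (maximalIdeal A) := by
      rw [Module.support_eq_zeroLocus, Ideal.annihilator_quotient]
    constructor
    · rintro ⟨rs, rfl, hrs, hreg⟩
      exact ModuleCat.subsingleton_ext_of_exists_isRegular (maximalIdeal A)
        (ModuleCat.of A (A ⧸ maximalIdeal A)) hs.le (ModuleCat.of A M) hlt rs hrs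
        (IsRegular.of_isWeaklyRegular_of_mem_maximalIdeal M hrs hreg)
    · intro h
      obtain ⟨rs, h1, h2, h3⟩ := ModuleCat.exists_isRegular_of_exists_subsingleton_ext
        (maximalIdeal A) n (ModuleCat.of A M) hlt (ModuleCat.of A (A ⧸ maximalIdeal A)) hs h
      exact ⟨rs, h1, h2, h3.toIsWeaklyRegular⟩

theorem DepthGE.of_shortExact {n : ℕ} {M₁ M₂ M₃ : Type} [AddCommGroup M₁] [AddCommGroup M₂]
    [AddCommGroup M₃] [Module A M₁] [Module A M₂] [Module A M₃] [Module.Finite A M₁]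
    [Module.Finite A M₂] [Module.Finite A M₃] {f : M₁ →ₗ[A] M₂} {g : M₂ →ₗ[A] M₃}
    (hf : Function.Injective f) (hfg : Function.Exact f g) (hg : Function.Surjective g)
    (h₂ : DepthGE A n M₂) (h₃ : DepthGE A (n - 1) M₃) : DepthGE A n M₁ := by
  rw [depthGE_iff_ext] at *
  have hS : (ModuleCat.shortComplexOfCompEqZero f g hfg.linearMap_comp_eq_zero).ShortExact := by
    exact
      { exact := ModuleCat.shortComplex_exact _ hfg
        mono_f := (ModuleCat.mono_iff_injective _).mpr hf
        epi_g := (ModuleCat.epi_iff_surjective _).mpr hg }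
  intro i hi
  refine ⟨fun a b => ?_⟩
  suffices H : ∀ a : Ext (ModuleCat.of A (A ⧸ maximalIdeal A)) (ModuleCat.of A M₁) i, a = 0 from
    (H a).trans (H b).symm
  intro a
  cases i with
  | zero =>
    have := (ModuleCat.mono_iff_injective
      (ModuleCat.shortComplexOfCompEqZero f g hfg.linearMap_comp_eq_zero).f).mpr hf
    refine Ext.postcomp_mk₀_injective_of_mono _
      (ModuleCat.shortComplexOfCompEqZero f g hfg.linearMap_comp_eq_zero).f ?_
    exact (h₂ 0 hi).elim _ _
  | succ j =>
    obtain ⟨c, hc⟩ := Ext.covariant_sequence_exact₁ _ hS a ((h₂ _ hi).elim _ _) rfl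
    rw [← hc, (h₃ j (by omega)).elim c 0]
    simp

theorem DepthGE.quotSMulTop {n : ℕ} {M : Type} [AddCommGroup M] [Module A M] [Module.Finite A M]
    {x : A} (hx : IsSMulRegular M x) (h : DepthGE A (n + 1) M) :
    DepthGE A n (QuotSMulTop x M) := by
  rw [depthGE_iff_ext] at *
  intro i hi
  have zero1 := AddCommGrpCat.isZero_of_iff_subsingleton.mpr (h i (by omega))
  have zero2 := AddCommGrpCat.isZero_of_iff_subsingleton.mpr (h (i + 1) (by omega))
  exact AddCommGrpCat.subsingleton_of_isZero <| ShortComplex.Exact.isZero_of_both_zeros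
    ((Ext.covariant_sequence_exact₃' _
      (IsSMulRegular.smulShortComplex_shortExact (M := ModuleCat.of A M) hx)) i (i + 1) rfl)
    (zero1.eq_zero_of_src _) (zero2.eq_zero_of_tgt _)

theorem DepthGE.pi {n : ℕ} {ι : Type} [Fintype ι] [DecidableEq ι] {M : ι → Type}
    [∀ i, AddCommGroup (M i)]
    [∀ i, Module A (M i)] [∀ i, Module.Finite A (M i)] (h : ∀ i, DepthGE A n (M i)) :
    DepthGE A n (∀ i, M i) := by
  simp only [depthGE_iff_ext] at *
  intro j hj
  have key : ∀ a : Ext (ModuleCat.of A (A ⧸ maximalIdeal A)) (ModuleCat.of A (∀ i, M i)) j,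
      a = 0 := by
    intro a
    have hid : (𝟙 (ModuleCat.of A (∀ i, M i))) = ∑ i, ModuleCat.ofHom
        ((LinearMap.single A M i) ∘ₗ (LinearMap.proj i : (∀ i, M i) →ₗ[A] M i)) := by
      ext x j
      simp [Finset.sum_apply]
    rw [← Ext.comp_mk₀_id a, hid]
    have hz : ∀ s : Finset ι, a.comp (Ext.mk₀ (∑ i ∈ s, ModuleCat.ofHom
        ((LinearMap.single A M i) ∘ₗ (LinearMap.proj i : (∀ i, M i) →ₗ[A] M i))))
        (add_zero j) = 0 := by
      intro s
      induction s using Finset.induction_on with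
      | empty => simp
      | insert i s hi ih =>
        rw [Finset.sum_insert hi, Ext.mk₀_add, Ext.comp_add, ih, add_zero,
          ModuleCat.ofHom_comp, ← Ext.mk₀_comp_mk₀, ← Ext.comp_assoc_of_third_deg_zero,
          (h i j hj).elim (a.comp (Ext.mk₀ (ModuleCat.ofHom (LinearMap.proj i))) (add_zero j)) 0]
        simp
    exact hz _
  exact ⟨fun a b => (key a).trans (key b).symm⟩

open scoped Pointwise in
theorem DepthGE.mem_of_smul_mem {n : ℕ} {M : Type} [AddCommGroup M] [Module A M]
    [Module.Finite A M] (h : DepthGE A n M) {rs : List A} (hlen : rs.length < n)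
    (hrs : ∀ r ∈ rs, r ∈ maximalIdeal A) (hreg : IsWeaklyRegular M rs) {m : M}
    (hm : ∀ y ∈ maximalIdeal A, y • m ∈ (Ideal.ofList rs • ⊤ : Submodule A M)) :
    m ∈ (Ideal.ofList rs • ⊤ : Submodule A M) := by
  induction rs generalizing n M with
  | nil =>
    obtain ⟨ss, hss, hmem, hr⟩ := h
    match ss, hss, hmem, hr with
    | [], hss, _, _ => simp at hss; omega
    | y :: ss, _, hmem, hr =>
      rw [isWeaklyRegular_cons_iff] at hr
      have := hm y (hmem y (by simp))
      simp only [Ideal.ofList_nil, Submodule.bot_smul, Submodule.mem_bot] at this ⊢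
      exact hr.1 (by simpa using this)
  | cons x rs ih =>
    rw [isWeaklyRegular_cons_iff] at hreg
    have hcomap : ∀ z : M, z ∈ (Ideal.ofList (x :: rs) • ⊤ : Submodule A M) ↔
        (Submodule.mkQ (x • (⊤ : Submodule A M)) z) ∈
          (Ideal.ofList rs • ⊤ : Submodule A (QuotSMulTop x M)) := by
      intro z
      rw [← Submodule.mem_comap,
        Submodule.comap_smul_top_of_surjective _ _ (Submodule.mkQ_surjective _),
        Submodule.ker_mkQ, Ideal.ofList_cons_smul, sup_comm]
    obtain ⟨n, rfl⟩ : ∃ k, n = k + 1 := ⟨n - 1, by omega⟩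
    rw [hcomap]
    refine ih (h.quotSMulTop hreg.1) (by simpa using hlen)
      (fun r hr => hrs r (by simp [hr])) hreg.2 fun y hy => ?_
    rw [← map_smul, ← hcomap]
    exact hm y hy

theorem DepthGE.of_flat {B : Type} [CommRing B] [IsLocalRing B] [IsNoetherianRing B] [Algebra A B]
    [Module.Flat A B] [IsLocalHom (algebraMap A B)]
    (hmax : (maximalIdeal A).map (algebraMap A B) = maximalIdeal B) {n : ℕ} (h : DepthGE B n B) :
    DepthGE A n A := by
  have := Module.FaithfullyFlat.of_flat_of_isLocalHom (A := A) (B := B)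
  suffices H : ∀ j ≤ n, DepthGE A j A from H n le_rfl
  intro j
  induction j with
  | zero => exact fun _ => ⟨[], by simp, by simp, IsWeaklyRegular.nil A A⟩
  | succ j ih =>
    intro hj
    obtain ⟨rs, hlen, hmem, hreg⟩ := ih (by omega)
    have hregB : IsWeaklyRegular B (rs.map (algebraMap A B)) := hreg.of_flat
    have hmemB : ∀ r ∈ rs.map (algebraMap A B), r ∈ maximalIdeal B := by
      intro r hr
      obtain ⟨a, ha, rfl⟩ := List.mem_map.mp hr
      rw [← hmax]
      exact Ideal.mem_map_of_mem _ (hmem a ha)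
    have key : Subsingleton ((A ⧸ maximalIdeal A) →ₗ[A]
        (A ⧸ (Ideal.ofList rs • ⊤ : Submodule A A))) := by
      refine subsingleton_of_forall_eq 0 fun f => ?_
      obtain ⟨a, ha⟩ := Submodule.Quotient.mk_surjective _ (f (Ideal.Quotient.mk _ 1))
      have ha' : ∀ y ∈ maximalIdeal A, y * a ∈ Ideal.ofList rs := by
        intro y hy
        have h0 : y • f (Ideal.Quotient.mk _ 1) = 0 := by
          rw [← map_smul]
          have : y • (Ideal.Quotient.mk (maximalIdeal A) 1) = 0 := by
            rw [← Ideal.Quotient.mk_eq_mk, ← Submodule.Quotient.mk_smul,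
              Submodule.Quotient.mk_eq_zero]
            simpa using hy
          rw [this, map_zero]
        rw [← ha, ← Submodule.Quotient.mk_smul, Submodule.Quotient.mk_eq_zero] at h0
        simpa using h0
      have hB := h.mem_of_smul_mem (rs := rs.map (algebraMap A B)) (by simp; omega) hmemB hregB
        (m := algebraMap A B a) (by
          intro y hy
          rw [← hmax] at hy
          have hle : (maximalIdeal A).map (algebraMap A B) ≤
              (Ideal.ofList (rs.map (algebraMap A B))).colon {algebraMap A B a} := by
            rw [Ideal.map_le_iff_le_comap]
            intro z hz
            rw [Ideal.mem_comap, Submodule.mem_colon_singleton, smul_eq_mul, ← map_mul,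
              ← Ideal.map_ofList]
            exact Ideal.mem_map_of_mem _ (ha' z hz)
          have := hle hy
          rw [Submodule.mem_colon_singleton] at this
          simpa using this)
      have hA : a ∈ Ideal.ofList rs := by
        rw [← Ideal.comap_map_eq_self_of_faithfullyFlat (B := B) (Ideal.ofList rs), Ideal.mem_comap,
          Ideal.map_ofList]
        simpa using hB
      ext
      change f (Ideal.Quotient.mk _ 1) = 0
      rw [← ha, Submodule.Quotient.mk_eq_zero]
      simpa using hA
    obtain ⟨r, hr, hrreg⟩ := IsSMulRegular.subsingleton_linearMap_iff.mp key
    rw [Ideal.annihilator_quotient] at hr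
    refine ⟨rs ++ [r], by simp [hlen], ?_, ?_⟩
    · intro x hx
      rcases List.mem_append.mp hx with hx | hx
      · exact hmem x hx
      · rw [List.mem_singleton.mp hx]; exact hr
    · rw [isWeaklyRegular_append_iff, isWeaklyRegular_singleton_iff]
      exact ⟨hreg, hrreg⟩

theorem DepthGE.exists_isWeaklyRegular_subset {n : ℕ} {M : Type} [AddCommGroup M] [Module A M]
    [Module.Finite A M] (h : DepthGE A n M) (s : Set A)
    (hsq : ∀ y ∈ maximalIdeal A, ∃ b ∈ s, ∃ c, ∀ m : M, (y * y) • m = (c * b) • m) :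
    ∃ rs : List A, rs.length = n ∧ (∀ r ∈ rs, r ∈ s) ∧ IsWeaklyRegular M rs := by
  induction n generalizing M with
  | zero => exact ⟨[], by simp, by simp, IsWeaklyRegular.nil A M⟩
  | succ n ih =>
    obtain ⟨ss, hss, hmem, hr⟩ := id h
    match ss, hss, hmem, hr with
    | [], hss, _, _ => simp at hss
    | y :: ss, _, hmem, hr =>
      rw [isWeaklyRegular_cons_iff] at hr
      obtain ⟨b, hb, c, hbc⟩ := hsq y (hmem y (by simp))
      have hbreg : IsSMulRegular M b := by
        refine IsSMulRegular.of_mul (a := c) ?_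
        have := hr.1.mul hr.1
        intro m m' hmm
        refine this ?_
        simpa only [hbc] using hmm
      obtain ⟨rs, h1, h2, h3⟩ := ih (h.quotSMulTop hbreg) (by
        intro y hy
        obtain ⟨b', hb', c', h'⟩ := hsq y hy
        refine ⟨b', hb', c', fun m => ?_⟩
        obtain ⟨m, rfl⟩ := Submodule.Quotient.mk_surjective _ m
        rw [← Submodule.Quotient.mk_smul, ← Submodule.Quotient.mk_smul, h'])
      refine ⟨b :: rs, by simp [h1], ?_, ?_⟩
      · intro r hr
        rcases List.mem_cons.mp hr with rfl | hr
        · exact hb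
        · exact h2 r hr
      · rw [isWeaklyRegular_cons_iff]
        exact ⟨hbreg, h3⟩

theorem DepthGE.le_depthIn {n : ℕ} (h : DepthGE A n A) : n ≤ depthIn A (maximalIdeal A) := by
  obtain ⟨rs, h1, h2, h3⟩ := h
  refine le_csSup ?_ ⟨rs, h1, h2, IsRegular.of_isWeaklyRegular_of_mem_maximalIdeal A h2 h3⟩
  have hbot : ringKrullDim A ≠ ⊥ := ringKrullDim_ne_bot
  have htop : ringKrullDim A ≠ ⊤ := ringKrullDim_ne_top
  obtain ⟨e, he⟩ := WithBot.ne_bot_iff_exists.mp hbot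
  obtain ⟨N, rfl⟩ := ENat.ne_top_iff_exists.mp (show e ≠ ⊤ by rintro rfl; exact htop he.symm)
  refine ⟨N, ?_⟩
  rintro _ ⟨rs, rfl, -, hr⟩
  have hd := ringKrullDim_add_length_eq_ringKrullDim_of_isRegular rs hr
  have : Nontrivial (A ⧸ Ideal.ofList rs) := by
    refine Ideal.Quotient.nontrivial_iff.mpr fun h => ?_
    apply hr.top_ne_smul
    simp [h]
  have h0 : (0 : WithBot ℕ∞) ≤ ringKrullDim (A ⧸ Ideal.ofList rs) := ringKrullDim_nonneg_of_nontrivial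
  have h1 : (rs.length : WithBot ℕ∞) ≤ ringKrullDim A := by
    rw [← hd]
    exact le_add_of_nonneg_left h0
  rw [← he] at h1
  exact_mod_cast h1
end Local

theorem DepthGE.of_le_depthIn {A : Type} [CommRing A] [IsLocalRing A] {n : ℕ}
    (h : n ≤ depthIn A (maximalIdeal A)) : DepthGE A n A := by
  obtain ⟨rs, h1, h2, h3⟩ : depthIn A (maximalIdeal A) ∈ {n : ℕ | ∃ rs : List A, rs.length = n ∧
      (∀ r ∈ rs, r ∈ maximalIdeal A) ∧ RingTheory.Sequence.IsRegular A rs} := by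
    by_cases hb : BddAbove {n : ℕ | ∃ rs : List A, rs.length = n ∧
      (∀ r ∈ rs, r ∈ maximalIdeal A) ∧ RingTheory.Sequence.IsRegular A rs}
    · exact Nat.sSup_mem ⟨0, [], by simp, by simp, IsRegular.nil A A⟩ hb
    · have h0 : depthIn A (maximalIdeal A) = 0 := Nat.sSup_of_not_bddAbove hb
      rw [h0]
      exact ⟨[], by simp, by simp, IsRegular.nil A A⟩
  refine ⟨rs.take n, by simp [h1, h], fun r hr => h2 r (List.mem_of_mem_take hr), ?_⟩
  have := h3.toIsWeaklyRegular
  rw [← List.take_append_drop n rs, isWeaklyRegular_append_iff] at this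
  exact this.1

theorem serreCondS_iff_depthGE {R : Type} [CommRing R] [IsNoetherianRing R] (ℓ : ℕ) :
    SerreCondS ℓ R ↔ ∀ (p : Ideal R) [p.IsPrime] (n : ℕ), n ≤ ℓ → (n : ℕ∞) ≤ p.height →
      DepthGE (Localization.AtPrime p) n (Localization.AtPrime p) := by
  constructor
  · intro h p hp n hn hnp
    have := h p hp
    rw [IsLocalization.AtPrime.ringKrullDim_eq_height p] at this
    refine DepthGE.of_le_depthIn ?_
    have h2 : ((n : ℕ∞) : WithBot ℕ∞) ≤ min ((ℓ : ℕ∞) : WithBot ℕ∞) p.height :=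
      le_min (by exact_mod_cast hn) (by exact_mod_cast hnp)
    exact_mod_cast h2.trans this
  · intro h p hp
    rw [IsLocalization.AtPrime.ringKrullDim_eq_height p]
    obtain ⟨e, he⟩ := ENat.ne_top_iff_exists.mp (Ideal.height_ne_top hp.ne_top)
    have h1 := (h p (min ℓ e) (min_le_left _ _) (by rw [← he]; exact_mod_cast min_le_right _ _)).le_depthIn
    rw [← he]
    have : min ((ℓ : ℕ∞) : WithBot ℕ∞) ((e : ℕ∞) : WithBot ℕ∞) = ((min ℓ e : ℕ) : ℕ∞) := by
      rcases le_total ℓ e with h | h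
      · rw [min_eq_left h, min_eq_left (by exact_mod_cast h)]
      · rw [min_eq_right h, min_eq_right (by exact_mod_cast h)]
    rw [this]
    exact_mod_cast h1

namespace SComplex

variable {V : Type} [DecidableEq V] (k : Type) [Field k] (K : SComplex V)

/-- The class of a variable in the Stanley–Reisner ring. -/
noncomputable def srX (v : V) : SRRing k K := Ideal.Quotient.mk (srIdeal k K) (MvPolynomial.X v)

theorem mem_srIdeal_iff (f : MvPolynomial V k) :
    f ∈ srIdeal k K ↔ ∀ m ∈ f.support, m.support ∉ K.faces := by
  have : (fun s : Finset V => ∏ v ∈ s, (MvPolynomial.X v : MvPolynomial V k)) =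
      fun s => MvPolynomial.monomial (∑ v ∈ s, Finsupp.single v 1) 1 := by
    funext s
    rw [MvPolynomial.monomial_sum_one]
    rfl
  rw [srIdeal, this, ← Set.image_image (fun m => MvPolynomial.monomial m (1 : k)),
    MvPolynomial.mem_ideal_span_monomial_image]
  refine forall₂_congr fun m _ => ⟨?_, fun h => ⟨_, ⟨_, h, rfl⟩, ?_⟩⟩
  · rintro ⟨_, ⟨s, hs, rfl⟩, hle⟩ hm
    refine hs (K.down_closed hm fun v hv => ?_)
    have := hle v
    rw [Finsupp.finsetSum_apply, Finset.sum_eq_single_of_mem v hv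
      (fun b _ hb => Finsupp.single_eq_of_ne (Ne.symm hb)), Finsupp.single_eq_same] at this
    rw [Finsupp.mem_support_iff]
    omega
  · intro v
    rw [Finsupp.finsetSum_apply]
    by_cases hv : v ∈ m.support
    · rw [Finset.sum_eq_single_of_mem v hv
        (fun b _ hb => Finsupp.single_eq_of_ne (Ne.symm hb)), Finsupp.single_eq_same]
      have := Finsupp.mem_support_iff.mp hv
      omega
    · rw [Finset.sum_eq_zero]
      · exact Nat.zero_le _
      · intro b hb
        exact Finsupp.single_eq_of_ne (fun h => hv (by rwa [h]))

variable {k K}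

/-- The algebra map out of a Stanley–Reisner ring given by values of the variables. -/
noncomputable def srLift {T : Type} [CommRing T] [Algebra k T] (f : V → T)
    (hf : ∀ s ∉ K.faces, ∏ v ∈ s, f v = 0) : SRRing k K →ₐ[k] T :=
  Ideal.Quotient.liftₐ (srIdeal k K) (MvPolynomial.aeval f) (by
    intro a ha
    have : srIdeal k K ≤ RingHom.ker (MvPolynomial.aeval (R := k) f) := by
      rw [srIdeal, Ideal.span_le]
      rintro _ ⟨s, hs, rfl⟩
      simpa [RingHom.mem_ker, map_prod] using hf s hs
    exact this ha)

@[simp]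
theorem srLift_srX {T : Type} [CommRing T] [Algebra k T] (f : V → T)
    (hf : ∀ s ∉ K.faces, ∏ v ∈ s, f v = 0) (v : V) : srLift (k := k) f hf (srX k K v) = f v := by
  change MvPolynomial.aeval f (MvPolynomial.X v) = f v
  simp

theorem prod_srX_eq_zero {s : Finset V} (hs : s ∉ K.faces) : ∏ v ∈ s, srX k K v = 0 := by
  simp only [srX, ← map_prod]
  exact Ideal.Quotient.eq_zero_iff_mem.mpr (Ideal.subset_span ⟨s, hs, rfl⟩)

@[elab_as_elim]
theorem srRing_induction {motive : SRRing k K → Prop} (r : SRRing k K)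
    (hC : ∀ a : k, motive (algebraMap k _ a))
    (hadd : ∀ a b, motive a → motive b → motive (a + b))
    (hmul : ∀ a v, motive a → motive (a * srX k K v)) : motive r := by
  obtain ⟨f, rfl⟩ := Ideal.Quotient.mk_surjective r
  induction f using MvPolynomial.induction_on with
  | C a => exact hC a
  | add p q hp hq => rw [map_add]; exact hadd _ _ hp hq
  | mul_X p v hp => rw [map_mul]; exact hmul _ _ hp

theorem srRing_algHom_ext {T : Type} [CommRing T] [Algebra k T] {f g : SRRing k K →ₐ[k] T}
    (h : ∀ v, f (srX k K v) = g (srX k K v)) : f = g :=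
  Ideal.Quotient.algHom_ext k (MvPolynomial.algHom_ext h)

instance : IsNoetherianRing (SRRing k K) := by
  classical
  have : Algebra.FiniteType k (SRRing k K) := by
    refine ⟨⟨(K.faces.biUnion id).image (srX k K), ?_⟩⟩
    rw [eq_top_iff]
    rintro r -
    induction r using srRing_induction with
    | hC a => exact Subalgebra.algebraMap_mem _ a
    | hadd a b ha hb => exact Subalgebra.add_mem _ ha hb
    | hmul a v ha =>
      refine Subalgebra.mul_mem _ ha ?_
      by_cases hv : v ∈ K.faces.biUnion id
      · exact Algebra.subset_adjoin (by simpa using ⟨v, by simpa using hv, rfl⟩)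
      · have : srX k K v = 0 := by
          have := prod_srX_eq_zero (k := k) (K := K) (s := {v}) (fun h => hv (by
            rw [Finset.mem_biUnion]; exact ⟨_, h, by simp⟩))
          simpa using this
        rw [this]
        exact Subalgebra.zero_mem _
  exact Algebra.FiniteType.isNoetherianRing k _

theorem prod_ite_eq_zero {T : Type} [CommRing T] {G : Finset V} (hG : G ∈ K.faces) (f : V → T)
    (s : Finset V) (hs : s ∉ K.faces) : ∏ v ∈ s, (if v ∈ G then f v else 0) = 0 := by
  by_cases h : s ⊆ G
  · exact absurd (K.down_closed hG h) hs
  · obtain ⟨v, hv, hvG⟩ := Finset.not_subset.mp h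
    exact Finset.prod_eq_zero hv (by simp [hvG])

variable (k) in
/-- Restriction to a face: the variables outside of the face are sent to zero. -/
noncomputable def faceHom {G : Finset V} (hG : G ∈ K.faces) :
    SRRing k K →ₐ[k] MvPolynomial V k :=
  srLift (fun v => if v ∈ G then MvPolynomial.X v else 0) (prod_ite_eq_zero hG _)

theorem faceHom_srX {G : Finset V} (hG : G ∈ K.faces) (v : V) :
    faceHom k hG (srX k K v) = if v ∈ G then MvPolynomial.X v else 0 := srLift_srX _ _ _

theorem coeff_faceHom {G : Finset V} (hG : G ∈ K.faces) (f : MvPolynomial V k) (m : V →₀ ℕ)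
    (hm : m.support ⊆ G) :
    (faceHom k hG (Ideal.Quotient.mk _ f)).coeff m = f.coeff m := by
  change (MvPolynomial.aeval (fun v => if v ∈ G then MvPolynomial.X v else 0) f).coeff m = _
  induction f using MvPolynomial.induction_on' with
  | monomial n a =>
    rw [MvPolynomial.aeval_monomial, MvPolynomial.algebraMap_eq, MvPolynomial.coeff_C_mul,
      MvPolynomial.coeff_monomial]
    by_cases hn : n.support ⊆ G
    · have : (n.prod fun i k_1 ↦ (if i ∈ G then (MvPolynomial.X i : MvPolynomial V k) else 0) ^ k_1)
          = MvPolynomial.monomial n 1 := by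
        rw [MvPolynomial.monomial_eq, map_one, one_mul]
        refine Finset.prod_congr rfl fun i hi => by simp [hn hi]
      rw [this, MvPolynomial.coeff_monomial]
      simp
    · obtain ⟨v, hv, hvG⟩ := Finset.not_subset.mp hn
      rw [Finsupp.prod, Finset.prod_eq_zero hv, if_neg]
      · simp
      · rintro rfl
        exact hvG (hm hv)
      · rw [if_neg hvG, zero_pow (Finsupp.mem_support_iff.mp hv)]
  | add p q hp hq => rw [map_add, MvPolynomial.coeff_add, MvPolynomial.coeff_add, hp, hq]

theorem exists_facet {F : Finset V} (hF : F ∈ K.faces) : ∃ G, K.IsFacet G ∧ F ⊆ G := by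
  obtain ⟨G, hG, hmax⟩ := (K.faces.filter (F ⊆ ·)).exists_max_image Finset.card
    ⟨F, by simp [hF]⟩
  rw [Finset.mem_filter] at hG
  refine ⟨G, ⟨hG.1, fun H hH hGH => ?_⟩, hG.2⟩
  exact Finset.eq_of_subset_of_card_le hGH
    (hmax H (Finset.mem_filter.mpr ⟨hH, hG.2.trans hGH⟩))

theorem srRing_eq_zero {r : SRRing k K}
    (h : ∀ G (hG : K.IsFacet G), faceHom k hG.1 r = 0) : r = 0 := by
  obtain ⟨f, rfl⟩ := Ideal.Quotient.mk_surjective r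
  rw [Ideal.Quotient.eq_zero_iff_mem, mem_srIdeal_iff]
  intro m hm hface
  obtain ⟨G, hG, hsub⟩ := exists_facet hface
  have := coeff_faceHom hG.1 f m hsub
  rw [h G hG, MvPolynomial.coeff_zero] at this
  exact MvPolynomial.mem_support_iff.mp hm this.symm

instance : IsReduced (SRRing k K) := by
  refine ⟨fun r hr => srRing_eq_zero fun G hG => ?_⟩
  exact (hr.map (faceHom k hG.1)).eq_zero

variable (k) in
/-- The prime ideal of a face, generated by the variables outside of the face. -/
noncomputable def facePrime {G : Finset V} (hG : G ∈ K.faces) : Ideal (SRRing k K) :=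
  RingHom.ker (faceHom k hG)

instance {G : Finset V} (hG : G ∈ K.faces) : (facePrime k hG).IsPrime := RingHom.ker_isPrime _

theorem srX_mem_facePrime {G : Finset V} (hG : G ∈ K.faces) {v : V} :
    srX k K v ∈ facePrime k hG ↔ v ∉ G := by
  rw [facePrime, RingHom.mem_ker, faceHom_srX]
  by_cases h : v ∈ G <;> simp [h, MvPolynomial.X_ne_zero]

theorem facePrime_le {G : Finset V} (hG : G ∈ K.faces) {I : Ideal (SRRing k K)}
    (h : ∀ v ∉ G, srX k K v ∈ I) : facePrime k hG ≤ I := by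
  have key : ∀ r : SRRing k K,
      r - Ideal.Quotient.mk (srIdeal k K) (faceHom k hG r) ∈ I := by
    intro r
    induction r using srRing_induction with
    | hC a =>
      rw [AlgHom.commutes]
      have : Ideal.Quotient.mk (srIdeal k K) (algebraMap k (MvPolynomial V k) a) =
        algebraMap k (SRRing k K) a := rfl
      rw [this, sub_self]
      exact I.zero_mem
    | hadd a b ha hb =>
      rw [map_add, map_add, add_sub_add_comm]
      exact I.add_mem ha hb
    | hmul a v ha =>
      rw [map_mul, map_mul, faceHom_srX]
      by_cases hv : v ∈ G
      · rw [if_pos hv]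
        change _ - _ * srX k K v ∈ _
        rw [← sub_mul]
        exact I.mul_mem_right _ ha
      · rw [if_neg hv, map_zero, mul_zero, sub_zero]
        exact I.mul_mem_left _ (h v hv)
  intro r hr
  have := key r
  rwa [(RingHom.mem_ker.mp hr : faceHom k hG r = 0), map_zero, sub_zero] at this

theorem facePrime_mono {F G : Finset V} (hF : F ∈ K.faces) (hG : G ∈ K.faces) (h : F ⊆ G) :
    facePrime k hG ≤ facePrime k hF :=
  facePrime_le hG fun _ hv => (srX_mem_facePrime hF).mpr fun hvF => hv (h hvF)

theorem exists_facePrime_le (p : Ideal (SRRing k K)) [hp : p.IsPrime] :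
    ∃ (G : Finset V) (hG : K.IsFacet G), facePrime k hG.1 ≤ p := by
  classical
  have h0 : (K.faces.attach.filter fun G => K.IsFacet G.1).inf (fun G => facePrime k G.2) ≤ p := by
    intro r hr
    rw [Submodule.mem_finsetInf] at hr
    rw [srRing_eq_zero (r := r) fun G hG => hr ⟨G, hG.1⟩ (by simp [hG])]
    exact p.zero_mem
  obtain ⟨G, hG, hle⟩ := (Ideal.IsPrime.inf_le' hp).mp h0
  exact ⟨G.1, (Finset.mem_filter.mp hG).2, hle⟩

end SComplex

theorem depthGE_zero {A : Type} [CommRing A] [IsLocalRing A] (M : Type) [AddCommGroup M]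
    [Module A M] : DepthGE A 0 M := ⟨[], by simp, by simp, IsWeaklyRegular.nil A M⟩

theorem mul_self_eq_zero_of_isReduced {A : Type} [CommRing A] [IsReduced A] {a : A}
    (h : a * a = 0) : a = 0 :=
  IsReduced.eq_zero a ⟨2, by rw [pow_two, h]⟩

theorem depthGE_one_of_isReduced {A : Type} [CommRing A] [IsLocalRing A] [IsNoetherianRing A]
    [IsReduced A] (h : maximalIdeal A ≠ ⊥) : DepthGE A 1 A := by
  have key : Subsingleton ((A ⧸ maximalIdeal A) →ₗ[A] A) := by
    refine subsingleton_of_forall_eq 0 fun f => ?_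
    have h0 : ∀ y ∈ maximalIdeal A, y * f (Ideal.Quotient.mk _ 1) = 0 := by
      intro y hy
      rw [← smul_eq_mul, ← map_smul]
      have : y • (Ideal.Quotient.mk (maximalIdeal A) 1) = 0 := by
        rw [← Ideal.Quotient.mk_eq_mk, ← Submodule.Quotient.mk_smul,
          Submodule.Quotient.mk_eq_zero]
        simpa using hy
      rw [this, map_zero]
    ext
    change f (Ideal.Quotient.mk _ 1) = 0
    by_cases hm : f (Ideal.Quotient.mk _ 1) ∈ maximalIdeal A
    · exact mul_self_eq_zero_of_isReduced (h0 _ hm)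
    · have hu : IsUnit (f (Ideal.Quotient.mk _ 1)) := by simpa using hm
      exact absurd ((Submodule.eq_bot_iff _).mpr fun y hy => by
        simpa using (hu.mul_left_eq_zero).mp (h0 y hy)) h
  obtain ⟨r, hr, hreg⟩ := IsSMulRegular.subsingleton_linearMap_iff.mp key
  rw [Ideal.annihilator_quotient] at hr
  exact ⟨[r], rfl, by simpa using hr, (isWeaklyRegular_singleton_iff A r).mpr hreg⟩

theorem serreCondS_of_isReduced {R : Type} [CommRing R] [IsNoetherianRing R] [IsReduced R] {ℓ : ℕ}
    (hℓ : ℓ ≤ 1) : SerreCondS ℓ R := by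
  rw [serreCondS_iff_depthGE]
  intro p hp n hn hnp
  match n, hn, hnp with
  | 0, _, _ => exact depthGE_zero _
  | 1, _, hnp =>
    refine depthGE_one_of_isReduced fun h => ?_
    have h1 := ringKrullDim_eq_zero_of_isField (isField_iff_maximalIdeal_eq.mpr h)
    rw [IsLocalization.AtPrime.ringKrullDim_eq_height p] at h1
    have : p.height = 0 := by exact_mod_cast h1
    simp [this] at hnp
  | n + 2, hn, _ => omega

open scoped Pointwise in
theorem not_depthGE_two {A : Type} [CommRing A] [IsLocalRing A] {I J : Ideal A}
    (hsup : maximalIdeal A ≤ I ⊔ J) (hinf : I ⊓ J = ⊥) (hI : I ≠ ⊥) (hJ : J ≠ ⊥) :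
    ¬ DepthGE A 2 A := by
  rintro ⟨rs, hlen, hmem, hreg⟩
  obtain ⟨x, y, rfl⟩ := List.length_eq_two.mp hlen
  rw [isWeaklyRegular_cons_iff, isWeaklyRegular_singleton_iff] at hreg
  obtain ⟨hx, hy⟩ := hreg
  have hzero : ∀ a ∈ I, a ∈ J → a = 0 := fun a h1 h2 => by
    have : a ∈ I ⊓ J := ⟨h1, h2⟩
    rwa [hinf] at this
  have hmul : ∀ a ∈ I, ∀ b ∈ J, a * b = 0 := fun a ha b hb =>
    hzero _ (I.mul_mem_right _ ha) (J.mul_mem_left _ hb)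
  obtain ⟨x₁, hx₁, x₂, hx₂, rfl⟩ := Submodule.mem_sup.mp (hsup (hmem x (by simp)))
  obtain ⟨y₁, hy₁, y₂, hy₂, rfl⟩ := Submodule.mem_sup.mp (hsup (hmem y (by simp)))
  have h1 : x₁ ∈ ((x₁ + x₂) • ⊤ : Submodule A A) := by
    rw [← Submodule.Quotient.mk_eq_zero]
    refine hy.right_eq_zero_of_smul ?_
    rw [← Submodule.Quotient.mk_smul, Submodule.Quotient.mk_eq_zero,
      Submodule.mem_smul_pointwise_iff_exists]
    refine ⟨y₁, trivial, ?_⟩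
    simp only [smul_eq_mul]
    linear_combination hmul y₁ hy₁ x₂ hx₂ - hmul x₁ hx₁ y₂ hy₂
  obtain ⟨c, -, hc⟩ := (Submodule.mem_smul_pointwise_iff_exists _ _ _).mp h1
  rw [smul_eq_mul] at hc
  by_cases hcu : IsUnit c
  · have h2 : x₂ * c = 0 := hzero _ (by
      have : x₂ * c = x₁ * (1 - c) := by linear_combination hc
      rw [this]; exact I.mul_mem_right _ hx₁) (J.mul_mem_right _ hx₂)
    rw [hcu.mul_left_eq_zero] at h2
    subst h2
    refine hJ ((Submodule.eq_bot_iff _).mpr fun z hz => hx.right_eq_zero_of_smul ?_)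
    rw [add_zero, smul_eq_mul, hmul _ hx₁ _ hz]
  · have hcu' : IsUnit (1 - c) := (isUnit_or_isUnit_one_sub_self c).resolve_left hcu
    have h2 : x₁ * (1 - c) = 0 := hzero _ (I.mul_mem_right _ hx₁) (by
      have : x₁ * (1 - c) = x₂ * c := by linear_combination -hc
      rw [this]; exact J.mul_mem_right _ hx₂)
    rw [hcu'.mul_left_eq_zero] at h2
    subst h2
    refine hI ((Submodule.eq_bot_iff _).mpr fun z hz => hx.right_eq_zero_of_smul ?_)
    rw [zero_add, smul_eq_mul, mul_comm, hmul _ hz _ hx₂]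

namespace SComplex

variable {V : Type} [DecidableEq V] {k : Type} [Field k] {K : SComplex V}

theorem prod_algebraMap_srX_eq_zero {F : Finset V} (hF : F ∈ K.faces) {T : Finset V}
    (hT : Disjoint T F) (hTF : T ∪ F ∉ K.faces) :
    ∏ v ∈ T, algebraMap _ (Localization.AtPrime (facePrime k hF)) (srX k K v) = 0 := by
  have h := prod_srX_eq_zero (k := k) hTF
  rw [Finset.prod_union hT] at h
  have hu : IsUnit (algebraMap _ (Localization.AtPrime (facePrime k hF))
      (∏ v ∈ F, srX k K v)) := by
    refine IsLocalization.map_units (M := (facePrime k hF).primeCompl) _ ⟨_, ?_⟩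
    intro hmem
    obtain ⟨v, hv, hvm⟩ := (inferInstance : (facePrime k hF).IsPrime).prod_mem_iff.mp hmem
    exact (srX_mem_facePrime hF).mp hvm hv
  rw [← map_prod]
  refine hu.mul_left_eq_zero.mp ?_
  rw [← map_mul, h, map_zero]

theorem algebraMap_srX_ne_zero {F G : Finset V} (hF : F ∈ K.faces) (hG : G ∈ K.faces)
    (hFG : F ⊆ G) {v : V} (hv : v ∈ G) :
    algebraMap _ (Localization.AtPrime (facePrime k hF)) (srX k K v) ≠ 0 := by
  intro h
  rw [IsLocalization.map_eq_zero_iff (facePrime k hF).primeCompl] at h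
  obtain ⟨⟨s, hs⟩, h⟩ := h
  have hm : s * srX k K v ∈ facePrime k hG := by
    rw [h]; exact Ideal.zero_mem _
  rcases (inferInstance : (facePrime k hG).IsPrime).mem_or_mem hm with h1 | h1
  · exact hs (facePrime_mono hF hG hFG h1)
  · exact (srX_mem_facePrime hG).mp h1 hv

theorem facePrime_lt {F G : Finset V} (hF : F ∈ K.faces) (hG : G ∈ K.faces) (h : F ⊂ G) :
    facePrime k hG < facePrime k hF := by
  refine lt_of_le_of_ne (facePrime_mono hF hG h.1) fun heq => ?_
  obtain ⟨v, hv, hvF⟩ := Finset.exists_of_ssubset h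
  have := (srX_mem_facePrime (k := k) hF).mpr hvF
  rw [← heq] at this
  exact (srX_mem_facePrime hG).mp this hv

theorem two_le_height_facePrime {F G : Finset V} (hF : F ∈ K.faces) (hG : G ∈ K.faces)
    (hFG : F ⊆ G) (hcard : F.card + 2 ≤ G.card) : 2 ≤ (facePrime k hF).height := by
  obtain ⟨v, hv, hvF⟩ := Finset.exists_mem_notMem_of_card_lt_card (show F.card < G.card by omega)
  have hE : G.erase v ∈ K.faces := K.down_closed hG (Finset.erase_subset _ _)
  have h1 : F ⊂ G.erase v := by
    refine lt_of_le_of_ne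
      (fun w hw => Finset.mem_erase.mpr ⟨fun h => hvF (h ▸ hw), hFG hw⟩) fun h => ?_
    have := congrArg Finset.card h
    rw [Finset.card_erase_of_mem hv] at this
    omega
  have h2 := Ideal.height_add_one_le_of_lt_of_isPrime (facePrime_lt (k := k) hF hE h1)
  have h3 := Ideal.height_add_one_le_of_lt_of_isPrime
    (facePrime_lt (k := k) hE hG (Finset.erase_ssubset hv))
  calc (2 : ℕ∞) = 0 + 1 + 1 := by norm_num
    _ ≤ (facePrime k hG).height + 1 + 1 := by gcongr; exact zero_le
    _ ≤ _ := (add_le_add_left h3 1).trans h2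

theorem card_facet_eq_of_serreS {ℓ : ℕ} (hℓ : 2 ≤ ℓ) (hS : SerreS k ℓ K) {F : Finset V}
    (hF : F ∈ K.faces) {G₁ G₂ : Finset V} (hG₁ : K.IsFacet G₁) (hG₂ : K.IsFacet G₂)
    (h₁ : F ⊆ G₁) (h₂ : F ⊆ G₂) : G₁.card = G₂.card := by
  by_contra hne
  obtain ⟨m, hm⟩ : ∃ m, m = K.rank - F.card := ⟨_, rfl⟩
  induction m using Nat.strong_induction_on generalizing F G₁ G₂ with
  | h m ih =>
  have ih' : ∀ v ∉ F, ∀ G₁ G₂, K.IsFacet G₁ → K.IsFacet G₂ → insert v F ⊆ G₁ → insert v F ⊆ G₂ →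
      G₁.card = G₂.card := by
    intro v hv G₁ G₂ h1 h2 h3 h4
    by_contra hne
    have hf : insert v F ∈ K.faces := K.down_closed h1.1 h3
    have hc : (insert v F).card ≤ K.rank := Finset.le_sup (f := Finset.card) hf
    have hc' := Finset.card_insert_of_notMem hv
    exact ih _ (by omega) hf h1 h2 h3 h4 hne rfl
  set A := Localization.AtPrime (facePrime k hF)
  set φ : V → A := fun v => algebraMap _ A (srX k K v)
  set I : Ideal A := Ideal.span
    (φ '' {v | v ∉ F ∧ ∃ G, K.IsFacet G ∧ insert v F ⊆ G ∧ G.card = G₁.card})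
  set J : Ideal A := Ideal.span
    (φ '' {v | v ∉ F ∧ ∃ G, K.IsFacet G ∧ insert v F ⊆ G ∧ G.card ≠ G₁.card})
  have hneF : ∀ G G', K.IsFacet G → K.IsFacet G' → F ⊆ G → F ⊆ G' → G.card ≠ G'.card →
      ∃ v ∈ G, v ∉ F := by
    intro G G' hG hG' h h' hc
    by_contra! hall
    have : G = F := Finset.Subset.antisymm hall h
    subst this
    exact hc (congrArg _ (hG.2 _ hG'.1 h'))
  obtain ⟨v₁, hv₁, hv₁F⟩ := hneF _ _ hG₁ hG₂ h₁ h₂ hne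
  obtain ⟨v₂, hv₂, hv₂F⟩ := hneF _ _ hG₂ hG₁ h₂ h₁ (Ne.symm hne)
  have hI : I ≠ ⊥ := by
    refine fun h => algebraMap_srX_ne_zero (k := k) hF hG₁.1 h₁ hv₁ ?_
    rw [← Ideal.mem_bot, ← h]
    exact Ideal.subset_span ⟨v₁, ⟨hv₁F, G₁, hG₁, Finset.insert_subset hv₁ h₁, rfl⟩, rfl⟩
  have hJ : J ≠ ⊥ := by
    refine fun h => algebraMap_srX_ne_zero (k := k) hF hG₂.1 h₂ hv₂ ?_
    rw [← Ideal.mem_bot, ← h]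
    exact Ideal.subset_span
      ⟨v₂, ⟨hv₂F, G₂, hG₂, Finset.insert_subset hv₂ h₂, Ne.symm hne⟩, rfl⟩
  have hmul : I * J = ⊥ := by
    rw [Ideal.span_mul_span', Ideal.span_eq_bot]
    rintro _ ⟨_, ⟨v, ⟨hv, G, hG, hGv, hGc⟩, rfl⟩, _, ⟨w, ⟨hw, G', hG', hGw, hGc'⟩, rfl⟩, rfl⟩
    have hvw : v ≠ w := by
      rintro rfl
      exact hGc' ((ih' v hv _ _ hG' hG hGw hGv).trans hGc)
    have := prod_algebraMap_srX_eq_zero (k := k) hF (T := {v, w}) (by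
      rw [Finset.disjoint_left]
      intro a ha
      rcases Finset.mem_insert.mp ha with rfl | ha
      · exact hv
      · rw [Finset.mem_singleton.mp ha]; exact hw) (by
      intro hface
      obtain ⟨H, hH, hsub⟩ := exists_facet hface
      have hvH : insert v F ⊆ H := fun a ha => hsub (by
        simp only [Finset.mem_insert, Finset.mem_union, Finset.mem_singleton] at ha ⊢; tauto)
      have hwH : insert w F ⊆ H := fun a ha => hsub (by
        simp only [Finset.mem_insert, Finset.mem_union, Finset.mem_singleton] at ha ⊢; tauto)
      exact hGc' ((ih' w hw _ _ hG' hH hGw hwH).trans ((ih' v hv _ _ hH hG hvH hGv).trans hGc)))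
    rwa [Finset.prod_pair hvw] at this
  have hinf : I ⊓ J = ⊥ := by
    refine (Submodule.eq_bot_iff _).mpr fun a ha => ?_
    have : a * a ∈ I * J := Ideal.mul_mem_mul ha.1 ha.2
    rw [hmul, Ideal.mem_bot] at this
    exact mul_self_eq_zero_of_isReduced (A := A) this
  have hsup : maximalIdeal A ≤ I ⊔ J := by
    rw [← IsLocalization.AtPrime.map_eq_maximalIdeal (facePrime k hF) A, Ideal.map_le_iff_le_comap]
    refine facePrime_le hF fun v hv => ?_
    rw [Ideal.mem_comap]
    by_cases hface : insert v F ∈ K.faces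
    · obtain ⟨H, hH, hsub⟩ := exists_facet hface
      by_cases hc : H.card = G₁.card
      · exact Ideal.mem_sup_left (Ideal.subset_span ⟨v, ⟨hv, H, hH, hsub, hc⟩, rfl⟩)
      · exact Ideal.mem_sup_right (Ideal.subset_span ⟨v, ⟨hv, H, hH, hsub, hc⟩, rfl⟩)
    · have := prod_algebraMap_srX_eq_zero (k := k) hF (T := {v}) (by simpa using hv)
        (by rwa [← Finset.insert_eq])
      rw [Finset.prod_singleton] at this
      rw [this]
      exact Ideal.zero_mem _
  refine not_depthGE_two hsup hinf hI hJ
    ((serreCondS_iff_depthGE ℓ).mp hS (facePrime k hF) 2 hℓ ?_)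
  have hlt₁ : F.card < G₁.card := Finset.card_lt_card
    ((Finset.ssubset_iff_of_subset h₁).mpr ⟨v₁, hv₁, hv₁F⟩)
  have hlt₂ : F.card < G₂.card := Finset.card_lt_card
    ((Finset.ssubset_iff_of_subset h₂).mpr ⟨v₂, hv₂, hv₂F⟩)
  rcases lt_or_gt_of_ne hne with h | h
  · exact two_le_height_facePrime hF hG₂.1 h₂ (by omega)
  · exact two_le_height_facePrime hF hG₁.1 h₁ (by omega)

theorem pure_of_serreS {ℓ : ℕ} (hℓ : 2 ≤ ℓ) (hS : SerreS k ℓ K) : K.Pure := by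
  intro F hF
  obtain ⟨G, hG, hmax⟩ := K.faces.exists_mem_eq_sup ⟨F, hF.1⟩ Finset.card
  obtain ⟨H, hH, hGH⟩ := exists_facet hG
  have h1 : H.card = K.rank :=
    le_antisymm (Finset.le_sup (f := Finset.card) hH.1) (by
      rw [rank, hmax]; exact Finset.card_le_card hGH)
  rw [← h1]
  exact card_facet_eq_of_serreS hℓ hS (K.down_closed hG (Finset.empty_subset _)) hF hH
    (Finset.empty_subset _) (Finset.empty_subset _)

end SComplex

theorem Ideal.le_height_of_strictMonoOn {B R : Type} [CommRing B] [CommRing R] {p : Ideal B}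
    [p.IsPrime] {P : Ideal R} [P.IsPrime] {n : ℕ} (hn : (n : ℕ∞) ≤ p.height)
    (H : ∀ q : PrimeSpectrum B, q.asIdeal ≤ p → ∃ f : PrimeSpectrum B → PrimeSpectrum R,
      StrictMonoOn f (Set.Ici q) ∧ (f ⟨p, inferInstance⟩).asIdeal = P) :
    (n : ℕ∞) ≤ P.height := by
  have h1 := PrimeSpectrum.height_eq_orderHeight (⟨p, inferInstance⟩ : PrimeSpectrum B)
  have h2 := PrimeSpectrum.height_eq_orderHeight (⟨P, inferInstance⟩ : PrimeSpectrum R)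
  simp only at h1 h2
  rw [h1] at hn
  rw [h2]
  obtain ⟨s, hs, rfl⟩ := Order.exists_series_of_le_height _ hn
  obtain ⟨f, hf, hfp⟩ := H s.head (by
    have := s.head_le_last
    rw [hs] at this
    exact this)
  let t : LTSeries (PrimeSpectrum R) := ⟨s.length, fun i => f (s i), fun i =>
    hf (s.head_le _) (s.head_le _) (s.step i)⟩
  have ht : t.last = ⟨P, inferInstance⟩ := by
    change f s.last = _
    rw [hs]
    exact PrimeSpectrum.ext hfp
  rw [← ht]
  exact Order.length_le_height_last (p := t)

theorem Ideal.le_height_of_eq_comap {B R : Type} [CommRing B] [CommRing R] [Algebra B R]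
    {p : Ideal B} [p.IsPrime] {n : ℕ} (hn : (n : ℕ∞) ≤ p.height) (ρ : R →ₐ[B] B) {P : Ideal R}
    [P.IsPrime] (hP : P = p.comap ρ) : (n : ℕ∞) ≤ P.height := by
  have hρ : Function.Surjective (ρ : R →+* B) := fun b => ⟨algebraMap B R b, ρ.commutes b⟩
  refine Ideal.le_height_of_strictMonoOn hn fun q _ =>
    ⟨PrimeSpectrum.comap (ρ : R →+* B), ?_, hP.symm⟩
  intro a _ b _ hab
  exact lt_of_le_of_ne (show PrimeSpectrum.comap (ρ : R →+* B) a ≤ PrimeSpectrum.comap _ b from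
    Ideal.comap_mono hab.le) ((PrimeSpectrum.comap_injective_of_surjective _ hρ).ne hab.ne)

theorem DepthGE.congr {A : Type} [CommRing A] [IsLocalRing A] {M N : Type} [AddCommGroup M]
    [Module A M] [AddCommGroup N] [Module A N] {n : ℕ} (e : M ≃ₗ[A] N) (h : DepthGE A n M) :
    DepthGE A n N := by
  obtain ⟨rs, h1, h2, h3⟩ := h
  exact ⟨rs, h1, h2, (e.isWeaklyRegular_congr rs).mp h3⟩

/-- Two localizations of a module at the same prime are isomorphic over the localized ring. -/
noncomputable def localizationEquiv {R : Type} [CommRing R] (S : Submonoid R) {M N : Type}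
    [AddCommGroup M] [Module R M] [AddCommGroup N] [Module R N] [Module (Localization S) N]
    [IsScalarTower R (Localization S) N] (f : M →ₗ[R] N) [IsLocalizedModule S f] :
    LocalizedModule S M ≃ₗ[Localization S] N :=
  (IsLocalizedModule.isBaseChange S (Localization S) (LocalizedModule.mkLinearMap S M)).equiv.symm
    ≪≫ₗ (IsLocalizedModule.isBaseChange S (Localization S) f).equiv

open scoped Pointwise in
theorem DepthGE.localizedQuotSMulTop {R : Type} [CommRing R] [IsNoetherianRing R] (P : Ideal R)
    [P.IsPrime] {θ : R} (hθ : IsSMulRegular R θ) {n : ℕ}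
    (h : DepthGE (Localization.AtPrime P) (n + 1) (Localization.AtPrime P)) :
    DepthGE (Localization.AtPrime P) n (LocalizedModule P.primeCompl (QuotSMulTop θ R)) := by
  have hreg : IsSMulRegular (Localization.AtPrime P)
      (algebraMap R (Localization.AtPrime P) θ) := by
    have h1 := IsWeaklyRegular.of_isLocalization (Localization.AtPrime P) P.primeCompl
      ((isWeaklyRegular_singleton_iff R θ).mpr hθ)
    exact (isWeaklyRegular_singleton_iff _ _).mp h1
  refine (h.quotSMulTop hreg).congr ?_
  exact ((IsLocalizedModule.isBaseChange P.primeCompl (Localization.AtPrime P)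
    (LocalizedModule.mkLinearMap P.primeCompl (QuotSMulTop θ R))).equiv.symm ≪≫ₗ
    (QuotSMulTop.algebraMapTensorEquivTensorQuotSMulTop θ R (Localization.AtPrime P)).symm ≪≫ₗ
      QuotSMulTop.congr (algebraMap R (Localization.AtPrime P) θ)
      (IsLocalizedModule.isBaseChange P.primeCompl (Localization.AtPrime P)
        (Algebra.linearMap R (Localization.AtPrime P))).equiv).symm

theorem List.exists_eq_map_of_forall_mem {α β : Type} (f : α → β) (s : Set α) (l : List β)
    (h : ∀ b ∈ l, b ∈ f '' s) : ∃ l' : List α, (∀ a ∈ l', a ∈ s) ∧ l'.map f = l := by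
  induction l with
  | nil => exact ⟨[], by simp, rfl⟩
  | cons b l ih =>
    obtain ⟨l', h1, rfl⟩ := ih fun b hb => h b (by simp [hb])
    obtain ⟨a, ha, rfl⟩ := h b (by simp)
    exact ⟨a :: l', by simpa using ⟨ha, h1⟩, rfl⟩

theorem DepthGE.descend {B R M : Type} [CommRing B] [CommRing R] [IsNoetherianRing R]
    [Algebra B R] [AddCommGroup M] [Module B M] [Module R M] [IsScalarTower B R M]
    [Module.Finite R M] (p : Ideal B) [p.IsPrime] (P : Ideal R) [P.IsPrime]
    (hpP : ∀ b ∉ p, algebraMap B R b ∉ P)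
    (h₁ : ∀ t ∉ P, ∃ b ∉ p, ∃ t' : R, ∀ m : M, (t' * t) • m = b • m)
    (h₂ : ∀ t ∈ P, ∃ b ∈ p, ∃ c : R, ∀ m : M, (t * t) • m = c • b • m) {n : ℕ}
    (h : DepthGE (Localization.AtPrime P) n (LocalizedModule P.primeCompl M)) :
    DepthGE (Localization.AtPrime p) n (LocalizedModule p.primeCompl M) := by
  let RP := Localization.AtPrime P
  let N := LocalizedModule P.primeCompl M
  let f : M →ₗ[R] N := LocalizedModule.mkLinearMap P.primeCompl M
  have hsurj : ∀ x : N, ∃ m : M, ∃ t ∉ P, t • x = f m := by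
    intro x
    obtain ⟨⟨m, t⟩, hmt⟩ := IsLocalizedModule.surj P.primeCompl f x
    exact ⟨m, t, t.2, hmt⟩
  have hinj : ∀ t ∉ P, ∀ x y : N, t • x = t • y → x = y := by
    intro t ht x y hxy
    exact IsLocalizedModule.smul_injective f (⟨t, ht⟩ : P.primeCompl) hxy
  have hloc : IsLocalizedModule p.primeCompl (f.restrictScalars B) := by
    refine ⟨fun s => ?_, fun x => ?_, fun {x y} hxy => ?_⟩
    · rw [Module.End.isUnit_iff]
      have h0 := (Module.End.isUnit_iff _).mp
        (IsLocalizedModule.map_units f (⟨algebraMap B R s, hpP s s.2⟩ : P.primeCompl))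
      convert h0 using 1
      funext x
      exact (algebraMap_smul R (s : B) x).symm
    · obtain ⟨m, t, ht, hmt⟩ := hsurj x
      obtain ⟨b, hb, t', hbt⟩ := h₁ t ht
      refine ⟨(t' • m, ⟨b, hb⟩), ?_⟩
      change b • x = f (t' • m)
      rw [← algebraMap_smul R b x]
      apply hinj t ht
      rw [smul_comm t, hmt, ← map_smul, algebraMap_smul, ← hbt, map_smul f t', mul_smul,
        smul_comm t', map_smul, map_smul]
    · obtain ⟨⟨t, ht⟩, hc⟩ := (IsLocalizedModule.eq_iff_exists P.primeCompl f).mp hxy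
      obtain ⟨b, hb, t', hbt⟩ := h₁ t ht
      refine ⟨⟨b, hb⟩, ?_⟩
      change b • x = b • y
      have hc' : t • x = t • y := hc
      rw [← hbt, ← hbt, mul_smul, mul_smul, hc']
  have : Module.Finite RP N := Module.Finite.of_isLocalizedModule P.primeCompl f
  obtain ⟨rs, hlen, hmem, hreg⟩ := h.exists_isWeaklyRegular_subset
    ((fun b => algebraMap R RP (algebraMap B R b)) '' p) (by
      intro y hy
      obtain ⟨t, u, rfl⟩ := IsLocalization.exists_mk'_eq P.primeCompl y
      have ht : t ∈ P := by
        by_contra hcon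
        exact (IsLocalRing.mem_maximalIdeal _).mp hy
          ((IsLocalization.AtPrime.isUnit_mk'_iff RP P t u).mpr hcon)
      obtain ⟨b, hb, c, hbc⟩ := h₂ t ht
      have key : ∀ x : N, (t * t) • x = (c * algebraMap B R b) • x := by
        intro x
        obtain ⟨m, v, hv, hm⟩ := hsurj x
        apply hinj v hv
        rw [smul_comm v, smul_comm v, hm, ← map_smul, ← map_smul, hbc, mul_smul, algebraMap_smul]
      refine ⟨_, ⟨b, hb, rfl⟩, IsLocalization.mk' RP 1 u * IsLocalization.mk' RP 1 u *
        algebraMap R RP c, fun x => ?_⟩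
      have e1 : IsLocalization.mk' RP t u * IsLocalization.mk' RP t u =
          IsLocalization.mk' RP 1 u * IsLocalization.mk' RP 1 u * algebraMap R RP (t * t) := by
        rw [IsLocalization.mk'_eq_mul_mk'_one t u, map_mul]
        ring
      rw [e1, mul_smul, algebraMap_smul, key, mul_assoc _ (algebraMap R RP c), ← map_mul,
        mul_smul _ (algebraMap R RP _), algebraMap_smul])
  obtain ⟨bs, hbs, rfl⟩ := List.exists_eq_map_of_forall_mem _ _ _ hmem
  rw [← Function.comp_def, ← List.map_map, isWeaklyRegular_map_algebraMap_iff,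
    isWeaklyRegular_map_algebraMap_iff] at hreg
  refine ⟨bs.map (algebraMap B _), by simpa using hlen, ?_, ?_⟩
  · intro r hr
    obtain ⟨b, hb, rfl⟩ := List.mem_map.mp hr
    exact (IsLocalization.AtPrime.to_map_mem_maximal_iff _ p b).mpr (hbs b hb)
  · rw [isWeaklyRegular_map_algebraMap_iff]
    exact ((IsLocalizedModule.iso p.primeCompl (f.restrictScalars B)).isWeaklyRegular_congr
      bs).mpr hreg

theorem IsWeaklyRegular.of_retract {A M N : Type} [CommRing A] [AddCommGroup M] [Module A M]
    [AddCommGroup N] [Module A N] {rs : List A} (h : IsWeaklyRegular M rs) (i : N →ₗ[A] M)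
    (r : M →ₗ[A] N) (hri : r ∘ₗ i = LinearMap.id) : IsWeaklyRegular N rs := by
  induction rs generalizing M N with
  | nil => exact IsWeaklyRegular.nil A N
  | cons a rs ih =>
    rw [isWeaklyRegular_cons_iff] at h ⊢
    refine ⟨fun x y hxy => ?_, ih h.2 (QuotSMulTop.map a i) (QuotSMulTop.map a r) ?_⟩
    · have hinj : Function.Injective i :=
        Function.LeftInverse.injective fun x => LinearMap.congr_fun hri x
      apply hinj
      apply h.1
      change a • i x = a • i y
      rw [← map_smul, ← map_smul]
      exact congrArg i hxy
    · rw [← QuotSMulTop.map_comp, hri, QuotSMulTop.map_id]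

theorem DepthGE.localized_of_retract {B M N : Type} [CommRing B] [AddCommGroup M] [Module B M]
    [AddCommGroup N] [Module B N] (p : Ideal B) [p.IsPrime] {n : ℕ}
    (h : DepthGE (Localization.AtPrime p) n (LocalizedModule p.primeCompl M)) (i : N →ₗ[B] M)
    (r : M →ₗ[B] N) (hri : r ∘ₗ i = LinearMap.id) :
    DepthGE (Localization.AtPrime p) n (LocalizedModule p.primeCompl N) := by
  obtain ⟨rs, h1, h2, h3⟩ := h
  refine ⟨rs, h1, h2, IsWeaklyRegular.of_retract h3 (LocalizedModule.map p.primeCompl i)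
    (LocalizedModule.map p.primeCompl r) ?_⟩
  ext x
  induction x using LocalizedModule.induction_on with
  | h m s =>
    simp only [LinearMap.comp_apply, LocalizedModule.map_mk, LinearMap.id_apply]
    rw [← LinearMap.comp_apply, hri, LinearMap.id_apply]

theorem DepthGE.of_ringEquiv {A A' : Type} [CommRing A] [IsLocalRing A] [CommRing A']
    [IsLocalRing A'] {n : ℕ} (e : A ≃+* A') (h : DepthGE A n A) : DepthGE A' n A' := by
  obtain ⟨rs, h1, h2, h3⟩ := h
  refine ⟨rs.map e, by simpa using h1, ?_, ?_⟩
  · intro r hr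
    obtain ⟨a, ha, rfl⟩ := List.mem_map.mp hr
    rw [mem_maximalIdeal, mem_nonunits_iff, MulEquiv.isUnit_map]
    exact (mem_maximalIdeal _).mp (h2 a ha)
  · let : Algebra A A' := e.toRingHom.toAlgebra
    have h4 : IsWeaklyRegular A' rs := by
      refine (LinearEquiv.isWeaklyRegular_congr (R := A) (M := A) (M₂ := A')
        { e.toAddEquiv with map_smul' := fun a b => ?_ } rs).mp h3
      exact e.map_mul a b
    exact (isWeaklyRegular_map_algebraMap_iff A' A' rs).mpr h4

open Polynomial in
theorem DepthGE.of_surjective_polynomial {R C : Type} [CommRing R] [CommRing C]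
    [IsNoetherianRing C] (φ : R →+* C[X]) (hφ : Function.Surjective φ) (p : Ideal C) [p.IsPrime]
    (Q : Ideal R) [Q.IsPrime] (hQ : Q = (p.map (Polynomial.C : C →+* C[X])).comap φ)
    (hker : ∀ r, φ r = 0 → ∃ s ∉ Q, s * r = 0) {n : ℕ}
    (h : DepthGE (Localization.AtPrime Q) n (Localization.AtPrime Q)) :
    DepthGE (Localization.AtPrime p) n (Localization.AtPrime p) := by
  let p' : Ideal C[X] := p.map (Polynomial.C : C →+* C[X])
  have hp' : p'.IsPrime := Ideal.isPrime_map_C_of_isPrime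
  have hbij : Function.Bijective (Localization.localRingHom Q p' φ hQ) := by
    constructor
    · rw [injective_iff_map_eq_zero]
      intro x hx
      obtain ⟨r, u, rfl⟩ := IsLocalization.exists_mk'_eq Q.primeCompl x
      rw [Localization.localRingHom_mk', IsLocalization.mk'_eq_zero_iff] at hx
      obtain ⟨⟨t, ht⟩, htr⟩ := hx
      obtain ⟨t, rfl⟩ := hφ t
      rw [← map_mul] at htr
      obtain ⟨s, hs, hsr⟩ := hker _ htr
      rw [IsLocalization.mk'_eq_zero_iff]
      refine ⟨⟨s * t, Q.primeCompl.mul_mem hs fun hc => ht ?_⟩, ?_⟩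
      · rw [hQ] at hc
        exact hc
      · rw [← hsr, mul_assoc]
    · intro y
      obtain ⟨c, ⟨t, ht⟩, rfl⟩ := IsLocalization.exists_mk'_eq p'.primeCompl y
      obtain ⟨c, rfl⟩ := hφ c
      obtain ⟨t, rfl⟩ := hφ t
      refine ⟨IsLocalization.mk' _ c (⟨t, fun hc => ht ?_⟩ : Q.primeCompl), ?_⟩
      · rw [hQ] at hc
        exact hc
      · rw [Localization.localRingHom_mk']
  have h' := h.of_ringEquiv (RingEquiv.ofBijective _ hbij)
  have hcomap : p = p'.comap (Polynomial.C : C →+* C[X]) := by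
    ext a
    rw [Ideal.mem_comap, Ideal.mem_map_C_iff]
    refine ⟨fun ha i => ?_, fun ha => by simpa using ha 0⟩
    rw [coeff_C]
    split_ifs
    · exact ha
    · exact p.zero_mem
  let g := Localization.localRingHom p p' (Polynomial.C : C →+* C[X]) hcomap
  let : Algebra (Localization.AtPrime p) (Localization.AtPrime p') := g.toAlgebra
  have hflat : (Polynomial.C : C →+* C[X]).Flat := by
    rw [← Polynomial.algebraMap_eq, RingHom.flat_algebraMap_iff]
    infer_instance
  have : Module.Flat (Localization.AtPrime p) (Localization.AtPrime p') :=
    RingHom.Flat.localRingHom hflat p' p hcomap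
  have : IsLocalHom (algebraMap (Localization.AtPrime p) (Localization.AtPrime p')) :=
    Localization.isLocalHom_localRingHom _ _ _ hcomap
  refine DepthGE.of_flat ?_ h'
  rw [← Localization.AtPrime.map_eq_maximalIdeal, ← Localization.AtPrime.map_eq_maximalIdeal,
    Ideal.map_map, Ideal.map_map]
  congr 1
  ext c
  exact Localization.localRingHom_to_map p p' (Polynomial.C : C →+* C[X]) hcomap c

/-- The annihilator in `B` of the element `y` of the `B`-algebra `R`. -/
def annBase (B : Type) {R : Type} [CommRing B] [CommRing R] [Algebra B R] (y : R) : Ideal B :=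
  (Ideal.span {y}).annihilator.comap (algebraMap B R)

theorem mem_annBase {B R : Type} [CommRing B] [CommRing R] [Algebra B R] {y : R} {b : B} :
    b ∈ annBase B y ↔ b • y = 0 := by
  rw [annBase, Ideal.mem_comap, Submodule.mem_annihilator_span_singleton, algebraMap_smul]

section

variable {B R ι : Type} [CommRing B] [CommRing R] [Algebra B R]
  {x : ι → R}

theorem mul_eq_mul_sum [Fintype ι] (hx : ∀ v w, v ≠ w → x v * x w = 0) (s : ι → R) (v : ι) :
    x v * ∑ w, x w * s w = x v * x v * s v := by
  rw [Finset.mul_sum, Finset.sum_eq_single v]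
  · ring
  · intro w _ hw
    rw [← mul_assoc, hx v w hw.symm, zero_mul]
  · simp

theorem exists_sum_of_adjoin_eq_top [Fintype ι] [DecidableEq ι] (hgen : Algebra.adjoin B (Set.range x) = ⊤)
    (ρ : R →ₐ[B] B) (hρx : ∀ v, ρ (x v) = 0) (r : R) :
    ∃ s : ι → R, r = algebraMap B R (ρ r) + ∑ v, x v * s v := by
  have hr : r ∈ Algebra.adjoin B (Set.range x) := hgen ▸ Algebra.mem_top
  induction hr using Algebra.adjoin_induction with
  | mem y hy =>
    obtain ⟨v, rfl⟩ := hy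
    refine ⟨Pi.single v 1, ?_⟩
    simp [hρx, Pi.single_apply]
  | algebraMap b => exact ⟨0, by simp⟩
  | add y z _ _ hy hz =>
    obtain ⟨s, hs⟩ := hy
    obtain ⟨t, ht⟩ := hz
    refine ⟨s + t, ?_⟩
    simp only [map_add, Pi.add_apply, mul_add, Finset.sum_add_distrib]
    linear_combination hs + ht
  | mul y z _ _ hy hz =>
    obtain ⟨s, hs⟩ := hy
    obtain ⟨t, ht⟩ := hz
    refine ⟨fun v => s v * z + algebraMap B R (ρ y) * t v, ?_⟩
    have h1 : ∑ v, x v * (s v * z + algebraMap B R (ρ y) * t v) =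
        (∑ v, x v * s v) * z + algebraMap B R (ρ y) * ∑ v, x v * t v := by
      rw [Finset.sum_mul, Finset.mul_sum, ← Finset.sum_add_distrib]
      exact Finset.sum_congr rfl fun v _ => by ring
    rw [h1, map_mul, map_mul]
    linear_combination z * hs + algebraMap B R (ρ y) * ht

theorem mul_self_mem_span_sum [Fintype ι] [DecidableEq ι] (hx : ∀ v w, v ≠ w → x v * x w = 0)
    (hgen : Algebra.adjoin B (Set.range x) = ⊤) (ρ : R →ₐ[B] B) (hρx : ∀ v, ρ (x v) = 0)
    (r : R) (hr : ρ r = 0) : ∃ c, r * r = (∑ v, x v) * c := by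
  obtain ⟨s, hs⟩ := exists_sum_of_adjoin_eq_top hgen ρ hρx r
  rw [hr, map_zero, zero_add] at hs
  refine ⟨∑ v, x v * (s v * s v), ?_⟩
  rw [Finset.sum_mul]
  conv_lhs => rw [hs]
  rw [Finset.sum_mul]
  refine Finset.sum_congr rfl fun v _ => ?_
  rw [mul_right_comm, mul_eq_mul_sum hx, mul_eq_mul_sum hx]
  ring

open Polynomial in
theorem exists_polynomial_of_adjoin_eq_top (hx : ∀ v w, v ≠ w → x v * x w = 0)
    (hgen : Algebra.adjoin B (Set.range x) = ⊤) (v : ι)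
    (φ : R →ₐ[B] (B ⧸ annBase B (x v))[X]) (hφv : φ (x v) = X)
    (hφw : ∀ w, w ≠ v → φ (x w) = 0) (r : R) :
    ∃ f : B[X], x v * r = x v * aeval (x v) f ∧ φ r = f.map (Ideal.Quotient.mk _) := by
  have hr : r ∈ Algebra.adjoin B (Set.range x) := hgen ▸ Algebra.mem_top
  induction hr using Algebra.adjoin_induction with
  | mem y hy =>
    obtain ⟨w, rfl⟩ := hy
    by_cases h : w = v
    · subst h
      exact ⟨X, by simp, by simp [hφv]⟩
    · exact ⟨0, by simp [hx v w (Ne.symm h)], by simp [hφw w h]⟩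
  | algebraMap b =>
    refine ⟨C b, by simp, ?_⟩
    rw [AlgHom.commutes, map_C]
    rfl
  | add y z _ _ hy hz =>
    obtain ⟨f, hf, hf'⟩ := hy
    obtain ⟨g, hg, hg'⟩ := hz
    exact ⟨f + g, by simp only [map_add, mul_add, hf, hg], by simp [hf', hg']⟩
  | mul y z _ _ hy hz =>
    obtain ⟨f, hf, hf'⟩ := hy
    obtain ⟨g, hg, hg'⟩ := hz
    refine ⟨f * g, ?_, by simp [hf', hg']⟩
    rw [map_mul]
    linear_combination z * hf + aeval (x v) f * hg

open Polynomial in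
theorem mul_eq_zero_of_map_eq_zero (hx : ∀ v w, v ≠ w → x v * x w = 0)
    (hgen : Algebra.adjoin B (Set.range x) = ⊤) (v : ι)
    (φ : R →ₐ[B] (B ⧸ annBase B (x v))[X]) (hφv : φ (x v) = X)
    (hφw : ∀ w, w ≠ v → φ (x w) = 0) (r : R) (hr : φ r = 0) : x v * r = 0 := by
  obtain ⟨f, hf, hf'⟩ := exists_polynomial_of_adjoin_eq_top hx hgen v φ hφv hφw r
  rw [hf, aeval_eq_sum_range, Finset.mul_sum]
  refine Finset.sum_eq_zero fun i _ => ?_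
  have h1 : f.coeff i ∈ annBase B (x v) := by
    rw [← Ideal.Quotient.eq_zero_iff_mem, ← coeff_map, ← hf', hr, coeff_zero]
  rw [mem_annBase] at h1
  rw [mul_smul_comm, ← smul_mul_assoc, h1, zero_mul]

open Polynomial in
theorem coeff_zero_eq_mk [DecidableEq ι] (hgen : Algebra.adjoin B (Set.range x) = ⊤)
    (ρ : R →ₐ[B] B) (hρx : ∀ v, ρ (x v) = 0) (v : ι)
    (φ : R →ₐ[B] (B ⧸ annBase B (x v))[X]) (hφv : φ (x v) = X)
    (hφw : ∀ w, w ≠ v → φ (x w) = 0) (r : R) :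
    (φ r).coeff 0 = Ideal.Quotient.mk _ (ρ r) := by
  have h : ((aeval (R := B ⧸ annBase B (x v)) (0 : B ⧸ annBase B (x v))).restrictScalars B).comp φ
      = (Ideal.Quotient.mkₐ B (annBase B (x v))).comp ρ := by
    refine AlgHom.ext_of_adjoin_eq_top hgen ?_
    rintro _ ⟨w, rfl⟩
    by_cases hw : w = v
    · subst hw
      simp [hφv, hρx]
    · simp [hφw w hw, hρx]
  have h2 := DFunLike.congr_fun h r
  simp only [AlgHom.comp_apply, AlgHom.restrictScalars_apply, Ideal.Quotient.mkₐ_eq_mk] at h2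
  rw [← h2, coeff_zero_eq_aeval_zero]

end

/-- Depth of a cyclic module over a localization, from the depth of the quotient ring. -/
theorem DepthGE.localized_quotient {B : Type} [CommRing B] [IsNoetherianRing B] (I p : Ideal B)
    [p.IsPrime] (hI : I ≤ p) (p' : Ideal (B ⧸ I)) [p'.IsPrime]
    (hp' : p' = p.map (Ideal.Quotient.mk I)) {n : ℕ}
    (h : DepthGE (Localization.AtPrime p') n (Localization.AtPrime p')) :
    DepthGE (Localization.AtPrime p) n (LocalizedModule p.primeCompl (B ⧸ I)) := by
  have hmem : ∀ b, Ideal.Quotient.mk I b ∈ p' ↔ b ∈ p := by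
    intro b
    rw [hp', ← Ideal.mem_comap, Ideal.comap_map_of_surjective _ Ideal.Quotient.mk_surjective]
    rw [← RingHom.ker_eq_comap_bot, Ideal.mk_ker, sup_eq_left.mpr hI]
  have h1 : DepthGE (Localization.AtPrime p') n (LocalizedModule p'.primeCompl (B ⧸ I)) :=
    h.congr (localizationEquiv p'.primeCompl
      (Algebra.linearMap (B ⧸ I) (Localization.AtPrime p'))).symm
  refine DepthGE.descend p p' (fun b hb => fun hc => hb ((hmem b).mp hc)) ?_ ?_ h1
  · intro t ht
    obtain ⟨b, rfl⟩ := Ideal.Quotient.mk_surjective t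
    refine ⟨b, fun hb => ht ((hmem b).mpr hb), 1, fun m => ?_⟩
    rw [one_mul]
    exact algebraMap_smul (B ⧸ I) b m
  · intro t ht
    obtain ⟨b, rfl⟩ := Ideal.Quotient.mk_surjective t
    refine ⟨b, (hmem b).mp ht, Ideal.Quotient.mk I b, fun m => ?_⟩
    rw [mul_smul]
    congr 1

theorem DepthGE.of_shortExact_pi {B : Type} [CommRing B] [IsNoetherianRing B] {ι : Type}
    [Fintype ι] [DecidableEq ι] {M : ι → Type} [∀ i, AddCommGroup (M i)] [∀ i, Module B (M i)]
    [∀ i, Module.Finite B (M i)] (p : Ideal B) [p.IsPrime] {n : ℕ} (f : B →ₗ[B] (∀ i, M i))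
    (hf : Function.Injective f)
    (h₂ : ∀ i, DepthGE (Localization.AtPrime p) n (LocalizedModule p.primeCompl (M i)))
    (h₃ : DepthGE (Localization.AtPrime p) (n - 1)
      (LocalizedModule p.primeCompl ((∀ i, M i) ⧸ LinearMap.range f))) :
    DepthGE (Localization.AtPrime p) n (Localization.AtPrime p) := by
  have hpi : DepthGE (Localization.AtPrime p) n (LocalizedModule p.primeCompl (∀ i, M i)) :=
    (DepthGE.pi h₂).congr (localizationEquiv p.primeCompl
      (LinearMap.pi fun i => LocalizedModule.mkLinearMap p.primeCompl (M i) ∘ₗ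
        LinearMap.proj i)).symm
  refine DepthGE.congr (localizationEquiv p.primeCompl
    (Algebra.linearMap B (Localization.AtPrime p))) ?_
  exact DepthGE.of_shortExact (f := LocalizedModule.map p.primeCompl f)
    (g := LocalizedModule.map p.primeCompl (LinearMap.range f).mkQ)
    (LocalizedModule.map_injective _ _ hf)
    (LocalizedModule.map_exact _ _ _ (LinearMap.exact_map_mkQ_range f))
    (LocalizedModule.map_surjective _ _ (Submodule.mkQ_surjective _)) hpi h₃

section

open scoped Pointwise

variable {B R ι : Type} [CommRing B] [CommRing R] [Algebra B R] [Fintype ι] [DecidableEq ι]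
  (x : ι → R)

/-- The diagonal map from `B` to the product of its quotients by the annihilators. -/
def toQuotients (B : Type) {R ι : Type} [CommRing B] [CommRing R] [Algebra B R] (x : ι → R) :
    B →ₗ[B] (∀ v, B ⧸ annBase B (x v)) :=
  LinearMap.pi fun v => (annBase B (x v)).mkQ

/-- Multiplication by `y` as a map on the quotient by the annihilator. -/
def mulQuotient (B : Type) {R : Type} [CommRing B] [CommRing R] [Algebra B R] (y : R) :
    (B ⧸ annBase B y) →ₗ[B] R :=
  (annBase B y).liftQ (LinearMap.toSpanSingleton B R y) fun _ hb => mem_annBase.mp hb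

theorem mulQuotient_mk (y : R) (b : B) :
    mulQuotient B y (Ideal.Quotient.mk _ b) = b • y := rfl

/-- The inclusion of the cokernel of the diagonal map as a summand. -/
noncomputable def cokerToQuot :
    ((∀ v, B ⧸ annBase B (x v)) ⧸ LinearMap.range (toQuotients B x)) →ₗ[B]
      QuotSMulTop (∑ v, x v) R :=
  (LinearMap.range (toQuotients B x)).liftQ
    (((∑ v, x v) • (⊤ : Submodule R R)).mkQ.restrictScalars B ∘ₗ
      ∑ v, mulQuotient B (x v) ∘ₗ LinearMap.proj v) (by
    rintro _ ⟨b, rfl⟩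
    rw [LinearMap.mem_ker, LinearMap.comp_apply, LinearMap.restrictScalars_apply,
      Submodule.mkQ_apply, Submodule.Quotient.mk_eq_zero, LinearMap.sum_apply]
    have : ∑ v, (mulQuotient B (x v) ∘ₗ LinearMap.proj v) (toQuotients B x b) =
        (∑ v, x v) • algebraMap B R b := by
      rw [smul_eq_mul, Finset.sum_mul]
      refine Finset.sum_congr rfl fun v _ => ?_
      change b • x v = _
      rw [Algebra.smul_def, mul_comm]
    rw [this]
    exact Submodule.smul_mem_pointwise_smul _ _ _ trivial)

open Polynomial in
theorem exists_retraction_cokerToQuot (hgen : Algebra.adjoin B (Set.range x) = ⊤)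
    (ρ : R →ₐ[B] B) (hρx : ∀ v, ρ (x v) = 0)
    (φ : ∀ v, R →ₐ[B] (B ⧸ annBase B (x v))[X]) (hφv : ∀ v, φ v (x v) = X)
    (hφw : ∀ v w, w ≠ v → φ v (x w) = 0) :
    ∃ r : QuotSMulTop (∑ v, x v) R →ₗ[B]
      ((∀ v, B ⧸ annBase B (x v)) ⧸ LinearMap.range (toQuotients B x)),
      r ∘ₗ cokerToQuot x = LinearMap.id := by
  let g : R →ₗ[B] (∀ v, B ⧸ annBase B (x v)) := LinearMap.pi fun v =>
    ((lcoeff (B ⧸ annBase B (x v)) 1).restrictScalars B) ∘ₗ (φ v).toLinearMap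
  have hφθ : ∀ v, φ v (∑ w, x w) = X := by
    intro v
    rw [map_sum, Finset.sum_eq_single v (fun w _ hw => hφw v w hw) (by simp), hφv]
  let r : QuotSMulTop (∑ v, x v) R →ₗ[B]
      ((∀ v, B ⧸ annBase B (x v)) ⧸ LinearMap.range (toQuotients B x)) :=
    (((∑ v, x v) • (⊤ : Submodule R R)).restrictScalars B).liftQ
      ((LinearMap.range (toQuotients B x)).mkQ ∘ₗ g) (by
        intro y hy
        obtain ⟨s, -, rfl⟩ := hy
        rw [LinearMap.mem_ker, LinearMap.comp_apply, Submodule.mkQ_apply,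
          Submodule.Quotient.mk_eq_zero]
        refine ⟨ρ s, ?_⟩
        funext v
        change Ideal.Quotient.mk _ (ρ s) = (φ v ((∑ w, x w) * s)).coeff 1
        rw [map_mul, hφθ, coeff_X_mul, coeff_zero_eq_mk hgen ρ hρx v (φ v) (hφv v) (hφw v)]) ∘ₗ
      (Submodule.Quotient.restrictScalarsEquiv B _).symm.toLinearMap
  refine ⟨r, ?_⟩
  refine Submodule.linearMap_qext _ (LinearMap.ext fun c => ?_)
  change (LinearMap.range (toQuotients B x)).mkQ
    (g ((∑ w, mulQuotient B (x w) ∘ₗ LinearMap.proj w) c)) =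
      (LinearMap.range (toQuotients B x)).mkQ c
  congr 1
  funext v
  change (φ v ((∑ w, mulQuotient B (x w) ∘ₗ LinearMap.proj w) c)).coeff 1 = c v
  have hm : ∀ w, φ v (mulQuotient B (x w) (c w)) = if w = v then C (c v) * X else 0 := by
    intro w
    obtain ⟨b, hb⟩ := Ideal.Quotient.mk_surjective (c w)
    rw [← hb, mulQuotient_mk, map_smul]
    split_ifs with h
    · subst h
      rw [hφv, ← hb, Algebra.smul_def]
      rfl
    · rw [hφw v w h, smul_zero]
  rw [LinearMap.sum_apply, map_sum]
  simp [hm]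

open Polynomial in
/-- Depth descends from localizations of `R` to the localization of the retract `B` at a prime. -/
theorem DepthGE.of_retraction [IsNoetherianRing B] [IsNoetherianRing R]
    (hx : ∀ v w, v ≠ w → x v * x w = 0) (hgen : Algebra.adjoin B (Set.range x) = ⊤)
    (hreg : IsSMulRegular R (∑ v, x v))
    (ρ : R →ₐ[B] B) (hρx : ∀ v, ρ (x v) = 0)
    (φ : ∀ v, R →ₐ[B] (B ⧸ annBase B (x v))[X]) (hφv : ∀ v, φ v (x v) = X)
    (hφw : ∀ v w, w ≠ v → φ v (x w) = 0) (p : Ideal B) [p.IsPrime] {n : ℕ}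
    (hP : ∀ (P : Ideal R) [P.IsPrime], P = p.comap ρ →
      DepthGE (Localization.AtPrime P) (n + 1) (Localization.AtPrime P))
    (hQ : ∀ v, annBase B (x v) ≤ p → ∀ (Q : Ideal R) [Q.IsPrime],
      Q = ((p.map (Ideal.Quotient.mk (annBase B (x v)))).map
        (C : _ →+* (B ⧸ annBase B (x v))[X])).comap (φ v) →
      DepthGE (Localization.AtPrime Q) (n + 1) (Localization.AtPrime Q)) :
    DepthGE (Localization.AtPrime p) (n + 1) (Localization.AtPrime p) := by
  have hρ : ∀ b, ρ (algebraMap B R b) = b := fun b => ρ.commutes b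
  refine DepthGE.of_shortExact_pi p (toQuotients B x) ?_ ?_ ?_
  · rw [injective_iff_map_eq_zero]
    intro b hb
    have h1 : ∀ v, b • x v = 0 := fun v =>
      mem_annBase.mp (Ideal.Quotient.eq_zero_iff_mem.mp (congrFun hb v))
    have h2 : algebraMap B R b = 0 := by
      apply hreg
      simp only [smul_eq_mul, mul_zero]
      rw [mul_comm, ← Algebra.smul_def, Finset.smul_sum]
      exact Finset.sum_eq_zero fun v _ => h1 v
    rw [← hρ b, h2, map_zero]
  · intro v
    by_cases hv : annBase B (x v) ≤ p
    · have hp' : (p.map (Ideal.Quotient.mk (annBase B (x v)))).IsPrime :=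
        Ideal.map_isPrime_of_surjective Ideal.Quotient.mk_surjective (by rwa [Ideal.mk_ker])
      have hsurj : Function.Surjective (φ v) := by
        intro f
        induction f using Polynomial.induction_on' with
        | add f g hf hg =>
          obtain ⟨a, rfl⟩ := hf
          obtain ⟨b, rfl⟩ := hg
          exact ⟨a + b, map_add _ _ _⟩
        | monomial i c =>
          obtain ⟨b, rfl⟩ := Ideal.Quotient.mk_surjective c
          refine ⟨algebraMap B R b * x v ^ i, ?_⟩
          rw [map_mul, map_pow, hφv, AlgHom.commutes, ← C_mul_X_pow_eq_monomial]
          rfl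
      have hQprime : (((p.map (Ideal.Quotient.mk (annBase B (x v)))).map
        (C : _ →+* (B ⧸ annBase B (x v))[X])).comap (φ v)).IsPrime :=
        have := Ideal.isPrime_map_C_of_isPrime (P := p.map (Ideal.Quotient.mk (annBase B (x v))))
        Ideal.comap_isPrime _ _
      refine DepthGE.localized_quotient _ p hv _ rfl ?_
      refine DepthGE.of_surjective_polynomial (φ v : R →+* _) hsurj _ _ rfl ?_ (hQ v hv _ rfl)
      intro r hr
      refine ⟨x v, fun hc => ?_, mul_eq_zero_of_map_eq_zero hx hgen v (φ v) (hφv v) (hφw v) r hr⟩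
      have hc' : φ v (x v) ∈ (p.map (Ideal.Quotient.mk (annBase B (x v)))).map
        (C : _ →+* (B ⧸ annBase B (x v))[X]) := hc
      rw [hφv, Ideal.mem_map_C_iff] at hc'
      have h1 := hc' 1
      rw [coeff_X_one] at h1
      exact hp'.ne_top ((Ideal.eq_top_iff_one _).mpr h1)
    · obtain ⟨b, hb, hbp⟩ := SetLike.not_le_iff_exists.mp hv
      have : Subsingleton (LocalizedModule p.primeCompl (B ⧸ annBase B (x v))) := by
        rw [LocalizedModule.subsingleton_iff]
        intro m
        refine ⟨b, hbp, ?_⟩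
        obtain ⟨c, rfl⟩ := Ideal.Quotient.mk_surjective m
        change Ideal.Quotient.mk _ (b * c) = 0
        exact Ideal.Quotient.eq_zero_iff_mem.mpr (Ideal.mul_mem_right _ _ hb)
      exact depthGE_of_subsingleton _ _
  · obtain ⟨r, hr⟩ := exists_retraction_cokerToQuot x hgen ρ hρx φ hφv hφw
    refine DepthGE.localized_of_retract p ?_ (cokerToQuot x) r hr
    rw [Nat.add_sub_cancel]
    have hkill : ∀ c : R, ∀ m : QuotSMulTop (∑ v, x v) R, ((∑ v, x v) * c) • m = 0 := by
      intro c m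
      obtain ⟨m, rfl⟩ := Submodule.Quotient.mk_surjective _ m
      rw [← Submodule.Quotient.mk_smul, Submodule.Quotient.mk_eq_zero, mul_smul]
      exact Submodule.smul_mem_pointwise_smul _ _ _ trivial
    have hsq : ∀ t : R, ∃ c, (t - algebraMap B R (ρ t)) * (t - algebraMap B R (ρ t)) =
        (∑ v, x v) * c := fun t =>
      mul_self_mem_span_sum hx hgen ρ hρx _ (by rw [map_sub, hρ, sub_self])
    refine DepthGE.descend p (p.comap ρ) ?_ ?_ ?_
      (DepthGE.localizedQuotSMulTop (p.comap ρ) hreg (hP _ rfl))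
    · intro b hb hc
      exact hb (by simpa [hρ] using hc)
    · intro t ht
      obtain ⟨c, hc⟩ := hsq t
      have hb : ρ t ∉ p := ht
      refine ⟨ρ t * ρ t, fun h => hb ((Ideal.IsPrime.mem_or_mem inferInstance h).elim id id),
        2 * algebraMap B R (ρ t) - t, fun m => ?_⟩
      have e : (2 * algebraMap B R (ρ t) - t) * t =
          algebraMap B R (ρ t * ρ t) - (∑ v, x v) * c := by
        rw [← hc, map_mul]
        ring
      rw [e, sub_smul, hkill, sub_zero, algebraMap_smul]
    · intro t ht
      obtain ⟨c, hc⟩ := hsq t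
      refine ⟨ρ t, ht, 2 * t - algebraMap B R (ρ t), fun m => ?_⟩
      have e : t * t = (2 * t - algebraMap B R (ρ t)) * algebraMap B R (ρ t) +
          (∑ v, x v) * c := by
        rw [← hc]
        ring
      rw [e, add_smul, hkill, add_zero, mul_smul, algebraMap_smul]

end

namespace SComplex

variable {V : Type} [DecidableEq V] {k : Type} [Field k] {K : SComplex V} {U : Finset V}

theorem mem_antistar {F : Finset V} :
    F ∈ (K.antistar U).faces ↔ F ∈ K.faces ∧ Disjoint U F := by
  simp [antistar]

theorem srX_antistar_eq_zero {w : V} (hw : w ∈ U) : srX k (K.antistar U) w = 0 := by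
  have : ({w} : Finset V) ∉ (K.antistar U).faces := by
    rw [mem_antistar]
    simp [hw]
  simpa using prod_srX_eq_zero (k := k) this

variable (k K U) in
/-- The inclusion of the Stanley-Reisner ring of an induced subcomplex. -/
noncomputable def antistarIncl : SRRing k (K.antistar U) →ₐ[k] SRRing k K :=
  srLift (fun w => if w ∈ U then 0 else srX k K w) (by
    intro s hs
    by_cases h : Disjoint U s
    · rw [mem_antistar, and_iff_left h] at hs
      rw [← prod_srX_eq_zero (k := k) hs]
      exact Finset.prod_congr rfl fun w hw => if_neg fun hwU => Finset.disjoint_left.mp h hwU hw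
    · obtain ⟨w, hwU, hw⟩ := Finset.not_disjoint_iff.mp h
      exact Finset.prod_eq_zero hw (if_pos hwU))

theorem antistarIncl_srX (w : V) :
    antistarIncl k K U (srX k _ w) = if w ∈ U then 0 else srX k K w := srLift_srX _ _ _

noncomputable instance : Algebra (SRRing k (K.antistar U)) (SRRing k K) :=
  (antistarIncl k K U).toAlgebra

theorem algebraMap_antistar (b : SRRing k (K.antistar U)) :
    algebraMap _ (SRRing k K) b = antistarIncl k K U b := rfl

variable (k K U) in
/-- The retraction onto the Stanley-Reisner ring of an induced subcomplex. -/
noncomputable def antistarRetr :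
    SRRing k K →ₐ[SRRing k (K.antistar U)] SRRing k (K.antistar U) :=
  { (srLift (k := k) (srX k (K.antistar U)) fun s hs =>
      prod_srX_eq_zero fun h => hs (mem_antistar.mp h).1 :
      SRRing k K →ₐ[k] SRRing k (K.antistar U)) with
    commutes' := fun b => by
      have h : (srLift (k := k) (srX k (K.antistar U)) fun s hs =>
          prod_srX_eq_zero fun h => hs (mem_antistar.mp h).1 :
          SRRing k K →ₐ[k] SRRing k (K.antistar U)).comp (antistarIncl k K U) =
          AlgHom.id k _ := by
        refine srRing_algHom_ext fun w => ?_
        rw [AlgHom.comp_apply, antistarIncl_srX]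
        split_ifs with hw
        · rw [map_zero, AlgHom.id_apply, srX_antistar_eq_zero hw]
        · rw [srLift_srX, AlgHom.id_apply]
      exact DFunLike.congr_fun h b }

theorem antistarRetr_srX (w : V) : antistarRetr k K U (srX k K w) = srX k _ w :=
  srLift_srX _ (fun _ hs => prod_srX_eq_zero fun h => hs (mem_antistar.mp h).1) _

open Polynomial in
theorem prod_star_eq_zero (v : V) (s : Finset V) (hs : s ∉ K.faces) :
    ∏ w ∈ s, (if w = v then X else C (Ideal.Quotient.mk
      (annBase (SRRing k (K.antistar U)) (srX k K v)) (srX k (K.antistar U) w))) = 0 := by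
  by_cases hvs : v ∈ s
  · rw [← Finset.mul_prod_erase s _ hvs, if_pos rfl]
    have h1 : ∏ w ∈ s.erase v, (if w = v then X else C (Ideal.Quotient.mk
        (annBase (SRRing k (K.antistar U)) (srX k K v)) (srX k (K.antistar U) w))) =
        C (Ideal.Quotient.mk _ (∏ w ∈ s.erase v, srX k (K.antistar U) w)) := by
      rw [map_prod, map_prod]
      exact Finset.prod_congr rfl fun w hw => if_neg (Finset.ne_of_mem_erase hw)
    rw [h1, Ideal.Quotient.eq_zero_iff_mem.mpr, C_0, mul_zero]
    rw [mem_annBase, Algebra.smul_def, algebraMap_antistar, map_prod]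
    simp only [antistarIncl_srX]
    by_cases h : ∃ w ∈ s.erase v, w ∈ U
    · obtain ⟨w, hw, hwU⟩ := h
      have h0 : ∏ w ∈ s.erase v, (if w ∈ U then 0 else srX k K w) = 0 :=
        Finset.prod_eq_zero hw (if_pos hwU)
      rw [h0, zero_mul]
    · push Not at h
      rw [Finset.prod_congr rfl fun w hw => if_neg (h w hw), Finset.prod_erase_mul _ _ hvs]
      exact prod_srX_eq_zero hs
  · have h1 : ∏ w ∈ s, (if w = v then X else C (Ideal.Quotient.mk
        (annBase (SRRing k (K.antistar U)) (srX k K v)) (srX k (K.antistar U) w))) =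
        C (Ideal.Quotient.mk _ (∏ w ∈ s, srX k (K.antistar U) w)) := by
      rw [map_prod, map_prod]
      exact Finset.prod_congr rfl fun w hw => if_neg fun h : w = v => hvs (h ▸ hw)
    rw [h1, prod_srX_eq_zero fun h => hs (mem_antistar.mp h).1, map_zero, map_zero]

open Polynomial in
variable (k K U) in
/-- The map from the Stanley-Reisner ring to the coordinate ring of the star of a vertex `v`. -/
noncomputable def starHom (v : V) (hv : v ∈ U) : SRRing k K →ₐ[SRRing k (K.antistar U)]
    (SRRing k (K.antistar U) ⧸ annBase (SRRing k (K.antistar U)) (srX k K v))[X] :=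
  let φ : SRRing k K →ₐ[k]
      (SRRing k (K.antistar U) ⧸ annBase (SRRing k (K.antistar U)) (srX k K v))[X] :=
    srLift (fun w => if w = v then X else C (Ideal.Quotient.mk _ (srX k _ w)))
      (prod_star_eq_zero v)
  { φ with
    commutes' := fun b => by
      have h : φ.comp (antistarIncl k K U) =
          CAlgHom.comp (Ideal.Quotient.mkₐ k
            (annBase (SRRing k (K.antistar U)) (srX k K v))) := by
        refine srRing_algHom_ext fun w => ?_
        rw [AlgHom.comp_apply, antistarIncl_srX, AlgHom.comp_apply]
        split_ifs with hw
        · rw [map_zero, srX_antistar_eq_zero hw, map_zero, map_zero]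
        · rw [srLift_srX, if_neg fun h : w = v => hw (h ▸ hv)]
          rfl
      exact DFunLike.congr_fun h b }

open Polynomial in
theorem starHom_srX (v : V) (hv : v ∈ U) (w : V) : starHom k K U v hv (srX k K w) =
    if w = v then X else C (Ideal.Quotient.mk _ (srX k _ w)) :=
  srLift_srX (K := K) (k := k)
    (fun w => if w = v then X else C (Ideal.Quotient.mk _ (srX k _ w))) (prod_star_eq_zero v) w

theorem adjoin_srX_eq_top :
    Algebra.adjoin (SRRing k (K.antistar U)) (Set.range fun v : U => srX k K v) = ⊤ := by
  rw [eq_top_iff]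
  rintro r -
  induction r using srRing_induction with
  | hC a =>
    rw [← (antistarIncl k K U).commutes a]
    exact Subalgebra.algebraMap_mem _ _
  | hadd a b ha hb => exact add_mem ha hb
  | hmul a w ha =>
    refine mul_mem ha ?_
    by_cases hw : w ∈ U
    · exact Algebra.subset_adjoin ⟨⟨w, hw⟩, rfl⟩
    · have : srX k K w = algebraMap (SRRing k (K.antistar U)) _ (srX k _ w) := by
        rw [algebraMap_antistar, antistarIncl_srX, if_neg hw]
      rw [this]
      exact Subalgebra.algebraMap_mem _ _

theorem isSMulRegular_sum_srX (hU : ∀ F ∈ K.faces, ∀ v ∈ F, ∀ w ∈ F, v ∈ U → w ∈ U → v = w)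
    (hmeet : ∀ F, K.IsFacet F → ∃ u ∈ F, u ∈ U) :
    IsSMulRegular (SRRing k K) (∑ v : U, srX k K v) := by
  rw [isSMulRegular_iff_right_eq_zero_of_smul]
  intro r hr
  refine srRing_eq_zero fun G hG => ?_
  obtain ⟨u, huG, huU⟩ := hmeet G hG
  have h1 : faceHom k hG.1 (∑ v : U, srX k K v) = MvPolynomial.X u := by
    rw [map_sum, Finset.sum_eq_single ⟨u, huU⟩]
    · rw [faceHom_srX, if_pos huG]
    · intro w _ hw
      rw [faceHom_srX, if_neg]
      exact fun hwG => hw (Subtype.ext (hU G hG.1 _ hwG _ huG w.2 huU))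
    · simp
  have h2 := congrArg (faceHom k hG.1) hr
  rw [smul_eq_mul, map_mul, h1, map_zero] at h2
  exact (mul_eq_zero.mp h2).resolve_left (MvPolynomial.X_ne_zero u)

end SComplex

namespace SComplex

variable {V : Type} [DecidableEq V] {k : Type} [Field k] {K : SComplex V} {U : Finset V}

theorem exists_map_of_card_eq {F G G' : Finset V} (hFG : F ⊆ G) (hFG' : F ⊆ G')
    (hcard : G'.card = G.card) : ∃ σ : V → V, (∀ w ∈ F, σ w = w) ∧
      (∀ w ∈ G', w ∉ F → σ w ∉ F) ∧ ∀ u ∈ G, ∃ w ∈ G', σ w = u := by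
  have h : (G' \ F).card = (G \ F).card := by
    rw [Finset.card_sdiff_of_subset hFG, Finset.card_sdiff_of_subset hFG', hcard]
  let e := Finset.equivOfCardEq h
  refine ⟨fun w => if hw : w ∈ G' \ F then e ⟨w, hw⟩ else w, ?_, ?_, ?_⟩
  · intro w hw
    beta_reduce
    rw [dif_neg]
    simp [hw]
  · intro w hw hwF
    beta_reduce
    rw [dif_pos (Finset.mem_sdiff.mpr ⟨hw, hwF⟩)]
    exact (Finset.mem_sdiff.mp (e _).2).2
  · intro u hu
    by_cases huF : u ∈ F
    · refine ⟨u, hFG' huF, ?_⟩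
      beta_reduce
      rw [dif_neg]
      simp [huF]
    · refine ⟨e.symm ⟨u, Finset.mem_sdiff.mpr ⟨hu, huF⟩⟩, ?_, ?_⟩
      · exact (Finset.mem_sdiff.mp (e.symm _).2).1
      · beta_reduce
        rw [dif_pos (e.symm _).2]
        simp

open Polynomial in
theorem le_height_starHom {d : ℕ}
    (hU : ∀ F ∈ K.faces, ∀ v ∈ F, ∀ w ∈ F, v ∈ U → w ∈ U → v = w)
    (hmeet : ∀ F, K.IsFacet F → ∃ u ∈ F, u ∈ U) (hpure : ∀ F, K.IsFacet F → F.card = d)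
    (v : V) (hv : v ∈ U) (p : Ideal (SRRing k (K.antistar U))) [hp : p.IsPrime]
    (hI : annBase (SRRing k (K.antistar U)) (srX k K v) ≤ p) {n : ℕ}
    (hn : (n : ℕ∞) ≤ p.height) (Q : Ideal (SRRing k K)) [Q.IsPrime]
    (hQ : Q = ((p.map (Ideal.Quotient.mk (annBase (SRRing k (K.antistar U)) (srX k K v)))).map
        (C : _ →+* (SRRing k (K.antistar U) ⧸
          annBase (SRRing k (K.antistar U)) (srX k K v))[X])).comap (starHom k K U v hv)) :
    (n : ℕ∞) ≤ Q.height := by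
  classical
  refine Ideal.le_height_of_strictMonoOn hn fun q hq => ?_
  obtain ⟨G, hG, hGq⟩ := exists_facePrime_le q.asIdeal
  have hGU := (mem_antistar.mp hG.1).2
  have hGp : ∀ w ∉ G, srX k (K.antistar U) w ∈ p := fun w hw =>
    hq (hGq ((srX_mem_facePrime hG.1).mpr hw))
  let F := G.filter fun w => srX k (K.antistar U) w ∉ p
  have hFG : F ⊆ G := Finset.filter_subset _ _
  have hF : ∀ w, w ∈ F ↔ srX k (K.antistar U) w ∉ p := by
    intro w
    rw [Finset.mem_filter]
    exact ⟨And.right, fun h => ⟨by_contra fun hw => h (hGp w hw), h⟩⟩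
  have hvF : v ∉ F := fun h => Finset.disjoint_left.mp hGU hv (hFG h)
  have hface : insert v F ∈ K.faces := by
    by_contra h
    have h1 := prod_srX_eq_zero (k := k) h
    rw [Finset.prod_insert hvF] at h1
    have h2 : ∏ w ∈ F, srX k (K.antistar U) w ∈ p := by
      apply hI
      rw [mem_annBase, Algebra.smul_def, algebraMap_antistar, map_prod, mul_comm, ← h1]
      congr 1
      refine Finset.prod_congr rfl fun w hw => ?_
      rw [antistarIncl_srX, if_neg fun hwU => Finset.disjoint_left.mp hGU hwU (hFG hw)]
    obtain ⟨w, hw, hwp⟩ := (Ideal.IsPrime.prod_mem_iff).mp h2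
    exact (hF w).mp hw hwp
  obtain ⟨H, hH, hFH⟩ := exists_facet hface
  have hvH : v ∈ H := hFH (Finset.mem_insert_self v F)
  have hcard : (H.erase v).card = G.card := by
    obtain ⟨H', hH', hGH'⟩ := exists_facet (mem_antistar.mp hG.1).1
    obtain ⟨u, huH, huU⟩ := hmeet H' hH'
    have hG' : G = H'.erase u := by
      refine hG.2 _ (mem_antistar.mpr ⟨K.down_closed hH'.1 (Finset.erase_subset _ _), ?_⟩) ?_
      · rw [Finset.disjoint_left]
        intro w hwU hw
        exact (Finset.ne_of_mem_erase hw)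
          (hU H' hH'.1 _ (Finset.mem_of_mem_erase hw) _ huH hwU huU)
      · intro w hw
        refine Finset.mem_erase.mpr ⟨?_, hGH' hw⟩
        rintro rfl
        exact Finset.disjoint_left.mp hGU huU hw
    rw [hG', Finset.card_erase_of_mem hvH, Finset.card_erase_of_mem huH, hpure H hH,
      hpure H' hH']
  have hFH' : F ⊆ H.erase v := fun w hw =>
    Finset.mem_erase.mpr ⟨fun h => hvF (h ▸ hw), hFH (Finset.mem_insert_of_mem hw)⟩
  obtain ⟨σ, hσF, hσ, hσG⟩ := exists_map_of_card_eq hFG hFH' hcard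
  let g : V → (SRRing k (K.antistar U))[X] := fun w => if w = v then X else C (srX k _ (σ w))
  let χ : SRRing k K →ₐ[k] (SRRing k (K.antistar U))[X] :=
    srLift (fun w => if w ∈ H then g w else 0) (prod_ite_eq_zero hH.1 _)
  have hχ : ∀ w, χ (srX k K w) = if w ∈ H then g w else 0 := fun w =>
    srLift_srX _ (prod_ite_eq_zero hH.1 _) w
  have hprime : ∀ a : PrimeSpectrum (SRRing k (K.antistar U)),
      ((a.asIdeal.map (C : _ →+* (SRRing k (K.antistar U))[X])).comap χ).IsPrime := fun a =>
    have := Ideal.isPrime_map_C_of_isPrime (P := a.asIdeal)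
    Ideal.comap_isPrime _ _
  have hlift : ∀ b, ∃ r, χ r - C b ∈
      (facePrime k hG.1).map (C : _ →+* (SRRing k (K.antistar U))[X]) := by
    intro b
    induction b using srRing_induction with
    | hC a =>
      refine ⟨algebraMap k _ a, ?_⟩
      rw [AlgHom.commutes, IsScalarTower.algebraMap_apply k (SRRing k (K.antistar U))
        (SRRing k (K.antistar U))[X], algebraMap_eq, sub_self]
      exact Ideal.zero_mem _
    | hadd a b ha hb =>
      obtain ⟨r, hr⟩ := ha
      obtain ⟨s, hs⟩ := hb
      refine ⟨r + s, ?_⟩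
      convert Ideal.add_mem _ hr hs using 1
      rw [map_add, map_add]
      ring
    | hmul a w ha =>
      by_cases hw : w ∈ G
      · obtain ⟨r, hr⟩ := ha
        obtain ⟨u, hu, rfl⟩ := hσG w hw
        refine ⟨r * srX k K u, ?_⟩
        have hr' := Ideal.mul_mem_left _ (C (srX k (K.antistar U) (σ u))) hr
        convert hr' using 1
        rw [map_mul, map_mul, hχ, if_pos (Finset.mem_of_mem_erase hu)]
        simp only [g, if_neg (Finset.ne_of_mem_erase hu)]
        ring
      · refine ⟨0, ?_⟩
        rw [map_zero, zero_sub, neg_mem_iff]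
        exact Ideal.mem_map_of_mem _ (Ideal.mul_mem_left _ _ ((srX_mem_facePrime hG.1).mpr hw))
  refine ⟨fun a => ⟨_, hprime a⟩, ?_, ?_⟩
  · intro a ha b _ hab
    have hab' : a.asIdeal < b.asIdeal := hab
    refine lt_of_le_of_ne (Ideal.comap_mono (Ideal.map_mono hab'.le)) fun heq => ?_
    obtain ⟨y, hyb, hya⟩ := SetLike.exists_of_lt hab'
    obtain ⟨r, hr⟩ := hlift y
    have hra : χ r - C y ∈ a.asIdeal.map (C : _ →+* (SRRing k (K.antistar U))[X]) :=
      Ideal.map_mono (hGq.trans ha) hr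
    have h1 : χ r ∈ b.asIdeal.map (C : _ →+* (SRRing k (K.antistar U))[X]) := by
      rw [← sub_add_cancel (χ r) (C y)]
      exact Ideal.add_mem _ (Ideal.map_mono hab'.le hra) (Ideal.mem_map_of_mem _ hyb)
    have h2 : r ∈ (a.asIdeal.map (C : _ →+* (SRRing k (K.antistar U))[X])).comap χ := by
      rw [PrimeSpectrum.mk.injEq] at heq
      rw [heq]
      exact h1
    have h3 : C y ∈ a.asIdeal.map (C : _ →+* (SRRing k (K.antistar U))[X]) := by
      rw [← sub_sub_cancel (χ r) (C y)]
      exact Ideal.sub_mem _ h2 hra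
    rw [Ideal.mem_map_C_iff] at h3
    exact hya (by simpa using h3 0)
  · have key : ∀ r, ∃ f : (SRRing k (K.antistar U))[X],
        starHom k K U v hv r = f.map (Ideal.Quotient.mk _) ∧
        χ r - f ∈ p.map (C : _ →+* (SRRing k (K.antistar U))[X]) := by
      intro r
      induction r using srRing_induction with
      | hC a =>
        refine ⟨C (algebraMap k _ a), ?_, ?_⟩
        · rw [← (antistarIncl k K U).commutes a, ← algebraMap_antistar, AlgHom.commutes, map_C]
          rfl
        · rw [AlgHom.commutes, IsScalarTower.algebraMap_apply k (SRRing k (K.antistar U))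
            (SRRing k (K.antistar U))[X], algebraMap_eq, sub_self]
          exact Ideal.zero_mem _
      | hadd a b ha hb =>
        obtain ⟨f, hf, hf'⟩ := ha
        obtain ⟨f₂, hf₂, hf₂'⟩ := hb
        refine ⟨f + f₂, by rw [map_add, hf, hf₂, Polynomial.map_add], ?_⟩
        convert Ideal.add_mem _ hf' hf₂' using 1
        rw [map_add]
        ring
      | hmul a w ha =>
        obtain ⟨f, hf, hf'⟩ := ha
        refine ⟨f * if w = v then X else C (srX k _ w), ?_, ?_⟩
        · rw [map_mul, hf, Polynomial.map_mul, starHom_srX]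
          split_ifs
          · rw [map_X]
          · rw [map_C]
        · have hw : χ (srX k K w) - (if w = v then X else C (srX k _ w)) ∈
              p.map (C : _ →+* (SRRing k (K.antistar U))[X]) := by
            rw [hχ]
            by_cases hwv : w = v
            · subst hwv
              simp [hvH, g]
            · simp only [g, if_neg hwv]
              by_cases hwF : w ∈ F
              · rw [if_pos (hFH (Finset.mem_insert_of_mem hwF)), hσF w hwF, sub_self]
                exact Ideal.zero_mem _
              · refine Ideal.sub_mem _ ?_ (Ideal.mem_map_of_mem _ ?_)
                · split_ifs with hwH
                  · refine Ideal.mem_map_of_mem _ ?_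
                    have := hσ w (Finset.mem_erase.mpr ⟨hwv, hwH⟩) hwF
                    rwa [hF, not_not] at this
                  · exact Ideal.zero_mem _
                · rwa [hF, not_not] at hwF
          rw [map_mul]
          have hfw := Ideal.add_mem _ (Ideal.mul_mem_left _ (χ (srX k K w)) hf')
            (Ideal.mul_mem_left _ f hw)
          convert hfw using 1
          ring
    have hmk : ∀ b, Ideal.Quotient.mk (annBase (SRRing k (K.antistar U)) (srX k K v)) b ∈
        p.map (Ideal.Quotient.mk _) ↔ b ∈ p := by
      intro b
      rw [← Ideal.mem_comap, Ideal.comap_map_of_surjective _ Ideal.Quotient.mk_surjective,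
        ← RingHom.ker_eq_comap_bot, Ideal.mk_ker, sup_eq_left.mpr hI]
    rw [hQ]
    ext r
    obtain ⟨f, hf, hf'⟩ := key r
    have h1 : χ r ∈ p.map (C : _ →+* (SRRing k (K.antistar U))[X]) ↔
        f ∈ p.map (C : _ →+* (SRRing k (K.antistar U))[X]) := by
      rw [← sub_add_cancel (χ r) f]
      exact Ideal.add_mem_iff_right _ hf'
    change χ r ∈ p.map (C : _ →+* (SRRing k (K.antistar U))[X]) ↔
      starHom k K U v hv r ∈ (p.map (Ideal.Quotient.mk _)).map C
    rw [h1, hf, Ideal.mem_map_C_iff, Ideal.mem_map_C_iff]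
    simp only [coeff_map, hmk]

theorem serreS_antistar {d ℓ : ℕ}
    (hU : ∀ F ∈ K.faces, ∀ v ∈ F, ∀ w ∈ F, v ∈ U → w ∈ U → v = w)
    (hmeet : ∀ F, K.IsFacet F → ∃ u ∈ F, u ∈ U) (hpure : ∀ F, K.IsFacet F → F.card = d)
    (hS : SerreS k ℓ K) : SerreS k ℓ (K.antistar U) := by
  rw [SerreS, serreCondS_iff_depthGE] at hS ⊢
  intro p hp n hnℓ hn
  obtain _ | n := n
  · exact depthGE_zero _
  have hx : ∀ v w : U, v ≠ w → srX k K v * srX k K w = 0 := by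
    intro v w hvw
    have hne : (v : V) ≠ w := fun h => hvw (Subtype.ext h)
    have h : ({(v : V), (w : V)} : Finset V) ∉ K.faces := fun h =>
      hne (hU _ h v (by simp) w (by simp) v.2 w.2)
    have := prod_srX_eq_zero (k := k) h
    rwa [Finset.prod_pair hne] at this
  refine DepthGE.of_retraction (R := SRRing k K) (fun v : U => srX k K v) hx adjoin_srX_eq_top
    (isSMulRegular_sum_srX hU hmeet) (antistarRetr k K U)
    (fun v => by rw [antistarRetr_srX, srX_antistar_eq_zero v.2])
    (fun v => starHom k K U v v.2) (fun v => by rw [starHom_srX, if_pos rfl])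
    (fun v w hwv => ?_) p ?_ ?_
  · rw [starHom_srX, if_neg fun h => hwv (Subtype.ext h), srX_antistar_eq_zero w.2, map_zero,
      map_zero]
  · intro P hP hPeq
    exact hS P _ hnℓ (Ideal.le_height_of_eq_comap hn (antistarRetr k K U) hPeq)
  · intro v hv Q hQ hQeq
    exact hS Q _ hnℓ (le_height_starHom hU hmeet hpure v v.2 p hv hn Q hQeq)

end SComplex

namespace SComplex

variable {V : Type} [DecidableEq V]

theorem ext_faces {K L : SComplex V} (h : ∀ F, F ∈ K.faces ↔ F ∈ L.faces) : K = L := by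
  cases K
  cases L
  simp only [SComplex.mk.injEq]
  exact Finset.ext h

theorem antistar_antistar (K : SComplex V) (A B : Finset V) :
    (K.antistar A).antistar B = K.antistar (B ∪ A) := by
  refine ext_faces fun F => ?_
  simp only [mem_antistar, Finset.disjoint_union_left]
  tauto

theorem exists_mem_color {K : SComplex V} {d : ℕ} {π : Fin d → Finset V}
    (hcover : ∀ v : V, ({v} : Finset V) ∈ K.faces ↔ ∃ i, v ∈ π i)
    (hbal : ∀ F ∈ K.faces, ∀ i : Fin d, (F ∩ π i).card ≤ 1) {G : Finset V} (hG : G ∈ K.faces)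
    (hcard : G.card = d) (i : Fin d) : ∃ u ∈ G, u ∈ π i := by
  by_contra! h
  have hsub : G ⊆ (Finset.univ.erase i).biUnion fun j => G ∩ π j := by
    intro v hv
    obtain ⟨j, hj⟩ := (hcover v).mp (K.down_closed hG (Finset.singleton_subset_iff.mpr hv))
    refine Finset.mem_biUnion.mpr ⟨j, ?_, Finset.mem_inter.mpr ⟨hv, hj⟩⟩
    refine Finset.mem_erase.mpr ⟨?_, Finset.mem_univ j⟩
    rintro rfl
    exact h v hv hj
  have h1 := (Finset.card_le_card hsub).trans
    (Finset.card_biUnion_le_card_mul _ _ 1 fun j _ => hbal G hG j)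
  rw [hcard, Finset.card_erase_of_mem (Finset.mem_univ i), Finset.card_univ, Fintype.card_fin]
    at h1
  have := i.pos
  omega

theorem serreS_antistar_biUnion {k : Type} [Field k] {K : SComplex V} {d : ℕ}
    {π : Fin d → Finset V} (hrank : K.rank = d)
    (hdisj : ∀ i j : Fin d, i ≠ j → Disjoint (π i) (π j))
    (hcover : ∀ v : V, ({v} : Finset V) ∈ K.faces ↔ ∃ i, v ∈ π i)
    (hbal : ∀ F ∈ K.faces, ∀ i : Fin d, (F ∩ π i).card ≤ 1) {ℓ : ℕ} (hℓ : 2 ≤ ℓ)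
    (hS : SerreS k ℓ K) (A : Finset (Fin d)) : SerreS k ℓ (K.antistar (A.biUnion π)) := by
  induction A using Finset.induction_on with
  | empty =>
    have : K.antistar ((∅ : Finset (Fin d)).biUnion π) = K :=
      ext_faces fun F => by simp [mem_antistar]
    rwa [this]
  | insert i A hi ih =>
    rw [Finset.biUnion_insert, ← antistar_antistar]
    refine serreS_antistar ?_ ?_ (pure_of_serreS hℓ ih) ih
    · intro F hF v hv w hw hvi hwi
      exact Finset.card_le_one.mp (hbal F (mem_antistar.mp hF).1 i) v
        (Finset.mem_inter.mpr ⟨hv, hvi⟩) w (Finset.mem_inter.mpr ⟨hw, hwi⟩)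
    · intro F hF
      obtain ⟨hFK, hFA⟩ := mem_antistar.mp hF.1
      obtain ⟨G, hG, hFG⟩ := exists_facet hFK
      obtain ⟨u, huG, hui⟩ := exists_mem_color hcover hbal hG.1
        ((pure_of_serreS hℓ hS G hG).trans hrank) i
      have hFeq : F = G \ A.biUnion π :=
        hF.2 _ (mem_antistar.mpr ⟨K.down_closed hG.1 Finset.sdiff_subset, Finset.disjoint_sdiff⟩)
          fun w hw => Finset.mem_sdiff.mpr
            ⟨hFG hw, fun hwA => Finset.disjoint_left.mp hFA hwA hw⟩
      refine ⟨u, ?_, hui⟩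
      rw [hFeq, Finset.mem_sdiff, Finset.mem_biUnion]
      refine ⟨huG, ?_⟩
      rintro ⟨j, hj, huj⟩
      have hij : i ≠ j := by
        rintro rfl
        exact hi hj
      exact Finset.disjoint_left.mp (hdisj i j hij) hui huj

theorem restrict_eq_antistar {K : SComplex V} {d : ℕ} {π : Fin d → Finset V}
    (hdisj : ∀ i j : Fin d, i ≠ j → Disjoint (π i) (π j))
    (hcover : ∀ v : V, ({v} : Finset V) ∈ K.faces ↔ ∃ i, v ∈ π i) (S : Finset (Fin d)) :
    K.restrict (S.biUnion π) = K.antistar (Sᶜ.biUnion π) := by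
  refine ext_faces fun F => ?_
  rw [mem_antistar, restrict, Finset.mem_filter]
  refine and_congr_right fun hF => ⟨fun h => ?_, fun h v hv => ?_⟩
  · rw [Finset.disjoint_left]
    intro v hv hvF
    obtain ⟨i, hi, hvi⟩ := Finset.mem_biUnion.mp hv
    obtain ⟨j, hj, hvj⟩ := Finset.mem_biUnion.mp (h hvF)
    have hij : i ≠ j := by
      rintro rfl
      exact Finset.mem_compl.mp hi hj
    exact Finset.disjoint_left.mp (hdisj i j hij) hvi hvj
  · obtain ⟨i, hi⟩ := (hcover v).mp (K.down_closed hF (Finset.singleton_subset_iff.mpr hv))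
    refine Finset.mem_biUnion.mpr ⟨i, by_contra fun hiS => ?_, hi⟩
    exact Finset.disjoint_left.mp h
      (Finset.mem_biUnion.mpr ⟨i, Finset.mem_compl.mpr hiS, hi⟩) hv

end SComplex

end

/-- If the Stanley–Reisner ring of a balanced simplicial complex `(Δ, π)` of
dimension `d - 1` satisfies Serre's condition `(S_ℓ)`, then so does the Stanley–Reisner ring of
every rank selected subcomplex `Δ_S`, `S ⊆ [d]`. -/
theorem rank_selection_serre {V : Type} [DecidableEq V] (k : Type) [Field k]
    (K : SComplex V) (d : ℕ) (π : Fin d → Finset V)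
    (hrank : K.rank = d)
    (hdisj : ∀ i j : Fin d, i ≠ j → Disjoint (π i) (π j))
    (hcover : ∀ v : V, ({v} : Finset V) ∈ K.faces ↔ ∃ i, v ∈ π i)
    (hbal : ∀ F ∈ K.faces, ∀ i : Fin d, (F ∩ π i).card ≤ 1)
    (ℓ : ℕ) (hserre : SComplex.SerreS k ℓ K) (S : Finset (Fin d)) :
    SComplex.SerreS k ℓ (K.restrict (S.biUnion π)) := by
  rcases Nat.lt_or_ge ℓ 2 with hℓ | hℓ
  · exact serreCondS_of_isReduced (by omega)
  · rw [SComplex.restrict_eq_antistar hdisj hcover]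
    exact SComplex.serreS_antistar_biUnion hrank hdisj hcover hbal hℓ hserre _
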